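/- arXiv:1807.00234 — 10 statements merged into one kernel-verified Lean document; each statement's English description precedes it below -/
import Mathlib

section
/- For every p ∈ C and every z ∈ ℝⁿ, ‖P z − p‖² ≤ ‖z − p‖² − ‖P z − z‖² − 2 · d(p, ℝⁿ \ C) · ‖P z − z‖. Moreover ‖P z − z‖ = d(z, C), so equivalently ‖P z − p‖² ≤ ‖z − p‖² − d(z, C)² − 2 · d(p, ℝⁿ \ C) · d(z, C). -/
/-!
The obtuse-angle characterization of the projection says that `C` lies in the half-space
`⟪z - P z, w - P z⟫ ≤ 0`. A point `w` at distance less than `d(p, Cᶜ)` from `p` lies in `C`; taking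
`w` in direction `z - P z` from `p` gives
`d(p, Cᶜ) * ‖z - P z‖ ≤ ⟪z - P z, P z - p⟫`. Expanding `‖(z - P z) + (P z - p)‖ ^ 2` then
yields the inequality.
-/

open Metric Filter Topology

noncomputable section

/-- If `C` lies in the half-space `⟪u, w - q⟫ ≤ 0`, then the distance from `p ∈ C` to the bounding
hyperplane is at least the distance from `p` to the complement of `C`; both sides are scaled by
`‖u‖`, so that `u = 0` is allowed. -/
lemma infDist_compl_mul_norm_le_inner {E : Type*} [NormedAddCommGroup E] [InnerProductSpace ℝ E]
    {C : Set E} {u q p : E} (hp : p ∈ C) (h : ∀ w ∈ C, inner ℝ u (w - q) ≤ 0) :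
    infDist p Cᶜ * ‖u‖ ≤ inner ℝ u (q - p) := by
  have hinner : ∀ w : E, inner ℝ u (w - q) = inner ℝ u (w - p) - inner ℝ u (q - p) := by
    intro w
    rw [← inner_sub_right]
    congr 1
    abel
  have hnn : 0 ≤ inner ℝ u (q - p) := by
    have := h p hp
    rw [hinner, sub_self, inner_zero_right] at this
    linarith
  rcases eq_or_ne u 0 with rfl | hu
  · simp
  have hpos : 0 < ‖u‖ := norm_pos_iff.mpr hu
  rw [← le_div_iff₀ hpos]
  by_contra! hlt
  obtain ⟨s, hs, hsr⟩ := exists_between hlt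
  have hs0 : 0 < s := lt_of_le_of_lt (by positivity) hs
  have hw : p + (s / ‖u‖) • u ∈ C := by
    by_contra hw
    have hle := infDist_le_dist_of_mem (x := p) (Set.mem_compl hw)
    rw [dist_self_add_right, norm_smul, Real.norm_of_nonneg (by positivity),
      div_mul_cancel₀ _ hpos.ne'] at hle
    linarith
  have h2 := h _ hw
  have h3 : s / ‖u‖ * ‖u‖ ^ 2 = s * ‖u‖ := by field_simp
  rw [hinner, add_sub_cancel_left, inner_smul_right, real_inner_self_eq_norm_sq, h3] at h2
  rw [div_lt_iff₀ hpos] at hs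
  linarith

theorem stmt1 (n : ℕ) (hn : 0 < n)
    (C : Set (EuclideanSpace ℝ (Fin n)))
    (hCne : C.Nonempty) (hCcl : IsClosed C) (hCcv : Convex ℝ C)
    (hCuniv : C ≠ Set.univ)
    (P : EuclideanSpace ℝ (Fin n) → EuclideanSpace ℝ (Fin n))
    (hP : ∀ x, P x ∈ C ∧ ∀ y ∈ C, ‖x - P x‖ ≤ ‖x - y‖)
    (p : EuclideanSpace ℝ (Fin n)) (hp : p ∈ C)
    (z : EuclideanSpace ℝ (Fin n)) :
    ‖P z - p‖ ^ 2 ≤ ‖z - p‖ ^ 2 - ‖P z - z‖ ^ 2 - 2 * infDist p Cᶜ * ‖P z - z‖ ∧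
    ‖P z - z‖ = infDist z C ∧
    ‖P z - p‖ ^ 2 ≤ ‖z - p‖ ^ 2 - infDist z C ^ 2 - 2 * infDist p Cᶜ * infDist z C := by
  obtain ⟨hq, hmin⟩ := hP z
  have hdist : ‖P z - z‖ = infDist z C := by
    rw [norm_sub_rev]
    apply le_antisymm
    · exact (le_infDist hCne).2 fun y hy => by simpa [dist_eq_norm] using hmin y hy
    · simpa [dist_eq_norm] using infDist_le_dist_of_mem (x := z) hq
  have hobtuse : ∀ w ∈ C, inner ℝ (z - P z) (w - P z) ≤ 0 := by
    refine (norm_eq_iInf_iff_real_inner_le_zero hCcv hq).1 ?_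
    have : ‖z - P z‖ = infDist z C := by rw [norm_sub_rev, hdist]
    rw [this, infDist_eq_iInf]
    simp only [dist_eq_norm]
  have hkey := infDist_compl_mul_norm_le_inner hp hobtuse
  have hexp := norm_add_sq_real (z - P z) (P z - p)
  rw [sub_add_sub_cancel] at hexp
  have hmain : ‖P z - p‖ ^ 2 ≤
      ‖z - p‖ ^ 2 - ‖P z - z‖ ^ 2 - 2 * infDist p Cᶜ * ‖P z - z‖ := by
    rw [norm_sub_rev (P z) z]
    linarith
  exact ⟨hmain, hdist, hdist ▸ hmain⟩
end
end

section
/- Let ι = (ι₁, …, ι_m) be an index vector such that ⋂_{j=1}^m C ι_j ≠ ℝⁿ, let s ∈ ⋂_{j=1}^m C ι_j, and let z ∈ ℝⁿ. Then: (1) ‖P[ι](z) − s‖ ≤ ‖z − s‖, with equality if and only if z ∈ ⋂_{j=1}^m C ι_j; (2) ‖P[ι](z) − s‖² ≤ ‖z − s‖² − 2 · d(s, ℝⁿ \ ⋂_{j=1}^m C ι_j) · ‖P[ι](z) − z‖; (3) for every q with 1 ≤ q ≤ m, ‖P[ι](z) − s‖² ≤ ‖z − s‖² − 2 · d(s, ℝⁿ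 \ ⋂_{j=1}^m C ι_j) · d(z, C ι_q). -/
/-!
Write `S = ⋂ i ∈ ι, C i` and `r = d(s, Sᶜ)`, so that the closed ball of radius `r` about `s` lies in
every `C i` with `i ∈ ι`. For the projection `p` of `z` onto a convex set `K` containing that ball,
the variational inequality `⟪z - p, y - p⟫ ≤ 0` at the boundary point `y = s + r (z - p) / ‖z - p‖`
gives `‖p - s‖² + ‖z - p‖² + 2 r ‖z - p‖ ≤ ‖z - s‖²` (`norm_sq_proj_add_le`). Induction on the list
`ι` accumulates this gain: the triangle inequality yields (2), the 1-Lipschitz property of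
`d(·, C i)` yields (3), and the term `‖z - p‖²` forces every step to be trivial when equality holds
in (1).
-/

open Metric Filter Topology

noncomputable section

/-- `projSeq P ι x` applies the projections `P ι₁, …, P ι_m` in order, i.e. it is
`P[ι](x) = (P ι_m ∘ ⋯ ∘ P ι₁) x`. -/
def projSeq {α : Type*} (P : ℕ → α → α) (ι : List ℕ) (x : α) : α :=
  ι.foldl (fun y i => P i y) x

section Projection

variable {E : Type*} [NormedAddCommGroup E] [InnerProductSpace ℝ E]

theorem inner_sub_proj_nonpos {K : Set E} (hK : Convex ℝ K) {z p y : E} (hp : p ∈ K)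
    (hmin : ∀ w ∈ K, ‖z - p‖ ≤ ‖z - w‖) (hy : y ∈ K) : inner ℝ (z - p) (y - p) ≤ 0 := by
  refine (norm_eq_iInf_iff_real_inner_le_zero hK hp).1 ?_ y hy
  have : Nonempty K := ⟨⟨p, hp⟩⟩
  refine le_antisymm (le_ciInf fun w => hmin w w.2) ?_
  exact ciInf_le (f := fun w : K => ‖z - w‖)
    ⟨0, by rintro _ ⟨w, rfl⟩; exact norm_nonneg _⟩ ⟨p, hp⟩

/-- A projection onto a convex set containing the closed ball of radius `r` about `s` brings a point
closer to `s` by an amount controlled by `r` and the displacement. -/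
theorem norm_sq_proj_add_le {K : Set E} (hK : Convex ℝ K) {z p s : E} {r : ℝ} (hr : 0 ≤ r)
    (hball : closedBall s r ⊆ K) (hp : p ∈ K) (hmin : ∀ w ∈ K, ‖z - p‖ ≤ ‖z - w‖) :
    ‖p - s‖ ^ 2 + ‖z - p‖ ^ 2 + 2 * r * ‖z - p‖ ≤ ‖z - s‖ ^ 2 := by
  rcases eq_or_ne (z - p) 0 with h0 | h0
  · rw [sub_eq_zero.1 h0]
    simp
  have hn : ‖z - p‖ ≠ 0 := norm_ne_zero_iff.2 h0
  have hy : s + (r / ‖z - p‖) • (z - p) ∈ K := by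
    apply hball
    rw [mem_closedBall, dist_eq_norm, add_sub_cancel_left, norm_smul, Real.norm_eq_abs,
      abs_of_nonneg (by positivity), div_mul_cancel₀ _ hn]
  have h := inner_sub_proj_nonpos hK hp hmin hy
  have e1 : s + (r / ‖z - p‖) • (z - p) - p = (r / ‖z - p‖) • (z - p) - (p - s) := by abel
  have e2 : r / ‖z - p‖ * ‖z - p‖ ^ 2 = r * ‖z - p‖ := by field_simp
  rw [e1, inner_sub_right, inner_smul_right, real_inner_self_eq_norm_sq, e2] at h
  have h2 := norm_add_sq_real (z - p) (p - s)
  rw [sub_add_sub_cancel] at h2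
  linarith

/-- The ball may be taken closed, with radius exactly the distance to the complement, because `S` is
closed; radius `0` is covered by `s ∈ S`. -/
theorem closedBall_infDist_compl_subset {S : Set E} (hS : IsClosed S) {s : E} (hs : s ∈ S) :
    closedBall s (infDist s Sᶜ) ⊆ S := by
  rcases eq_or_ne (infDist s Sᶜ) 0 with h0 | h0
  · rw [h0, closedBall_zero]
    exact Set.singleton_subset_iff.2 hs
  · rw [← closure_ball s h0]
    exact closure_minimal ball_infDist_compl_subset hS

variable {C : ℕ → Set E} {P : ℕ → E → E}

theorem norm_sq_projSeq_add_le (hC : ∀ i, Convex ℝ (C i))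
    (hP : ∀ i x, P i x ∈ C i ∧ ∀ y ∈ C i, ‖x - P i x‖ ≤ ‖x - y‖) {s : E} {r : ℝ} (hr : 0 ≤ r)
    (ι : List ℕ) (hball : ∀ i ∈ ι, closedBall s r ⊆ C i) (z : E) :
    ‖projSeq P ι z - s‖ ^ 2 + 2 * r * ‖projSeq P ι z - z‖ ≤ ‖z - s‖ ^ 2 := by
  induction ι generalizing z with
  | nil => simp [projSeq]
  | cons a l ih =>
    have e : projSeq P (a :: l) z = projSeq P l (P a z) := rfl
    rw [e]
    have h1 := norm_sq_proj_add_le (hC a) hr (hball a (by simp)) (hP a z).1 (hP a z).2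
    have h2 := ih (fun i hi => hball i (by simp [hi])) (P a z)
    have h3 := norm_sub_le_norm_sub_add_norm_sub (projSeq P l (P a z)) (P a z) z
    rw [norm_sub_rev (P a z) z] at h3
    have h4 := mul_le_mul_of_nonneg_left h3 hr
    nlinarith [sq_nonneg ‖z - P a z‖]

theorem norm_sq_projSeq_add_infDist_le (hC : ∀ i, Convex ℝ (C i))
    (hP : ∀ i x, P i x ∈ C i ∧ ∀ y ∈ C i, ‖x - P i x‖ ≤ ‖x - y‖) {s : E} {r : ℝ} (hr : 0 ≤ r)
    (ι : List ℕ) (hball : ∀ i ∈ ι, closedBall s r ⊆ C i) (z : E) (i : ℕ) (hi : i ∈ ι) :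
    ‖projSeq P ι z - s‖ ^ 2 + 2 * r * infDist z (C i) ≤ ‖z - s‖ ^ 2 := by
  induction ι generalizing z with
  | nil => simp at hi
  | cons a l ih =>
    have e : projSeq P (a :: l) z = projSeq P l (P a z) := rfl
    rw [e]
    have h1 := norm_sq_proj_add_le (hC a) hr (hball a (by simp)) (hP a z).1 (hP a z).2
    have hl : ∀ i ∈ l, closedBall s r ⊆ C i := fun i hi => hball i (by simp [hi])
    rcases List.mem_cons.1 hi with rfl | hi
    · have h2 := norm_sq_projSeq_add_le hC hP hr l hl (P i z)
      have h3 := infDist_le_dist_of_mem (x := z) (hP i z).1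
      rw [dist_eq_norm] at h3
      have h4 := mul_le_mul_of_nonneg_left h3 hr
      have h5 := mul_nonneg hr (norm_nonneg (projSeq P l (P i z) - P i z))
      nlinarith [sq_nonneg ‖z - P i z‖]
    · have h2 := ih hl (P a z) hi
      have h3 := infDist_le_infDist_add_dist (s := C i) (x := z) (y := P a z)
      rw [dist_eq_norm] at h3
      have h4 := mul_le_mul_of_nonneg_left h3 hr
      nlinarith [sq_nonneg ‖z - P a z‖]

/-- If the composed projections bring `z` no closer to a common point `s`, then no single projection
moves `z`. -/
theorem mem_of_norm_le_projSeq (hC : ∀ i, Convex ℝ (C i))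
    (hP : ∀ i x, P i x ∈ C i ∧ ∀ y ∈ C i, ‖x - P i x‖ ≤ ‖x - y‖) {s : E}
    (ι : List ℕ) (hs : ∀ i ∈ ι, s ∈ C i) (z : E) (h : ‖z - s‖ ≤ ‖projSeq P ι z - s‖) :
    ∀ i ∈ ι, z ∈ C i := by
  induction ι with
  | nil => simp
  | cons a l ih =>
    have e : projSeq P (a :: l) z = projSeq P l (P a z) := rfl
    rw [e] at h
    -- only the gain `‖z - p‖²` is needed, so the radius is taken to be `0`
    have hb : ∀ i ∈ a :: l, closedBall s 0 ⊆ C i := fun i hi => by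
      rw [closedBall_zero]
      exact Set.singleton_subset_iff.2 (hs i hi)
    have h1 := norm_sq_proj_add_le (hC a) le_rfl (hb a (by simp)) (hP a z).1 (hP a z).2
    have h2 := norm_sq_projSeq_add_le hC hP le_rfl l (fun i hi => hb i (by simp [hi])) (P a z)
    have h3 := pow_le_pow_left₀ (norm_nonneg _) h 2
    have h4 : ‖z - P a z‖ ^ 2 = 0 := le_antisymm (by linarith) (sq_nonneg _)
    have h5 : P a z = z := (sub_eq_zero.1 (norm_eq_zero.1 (pow_eq_zero_iff two_ne_zero |>.1 h4))).symm
    rw [h5] at h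
    intro i hi
    rcases List.mem_cons.1 hi with rfl | hi
    · rw [← h5]
      exact (hP i z).1
    · exact ih (fun i hi => hs i (by simp [hi])) h i hi

theorem projSeq_eq_self
    (hP : ∀ i x, P i x ∈ C i ∧ ∀ y ∈ C i, ‖x - P i x‖ ≤ ‖x - y‖)
    (ι : List ℕ) (z : E) (hz : ∀ i ∈ ι, z ∈ C i) : projSeq P ι z = z := by
  induction ι with
  | nil => rfl
  | cons a l ih =>
    have e : projSeq P (a :: l) z = projSeq P l (P a z) := rfl
    have h1 := (hP a z).2 z (hz a (by simp))
    rw [sub_self, norm_zero] at h1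
    rw [e, ← sub_eq_zero.1 (norm_le_zero_iff.1 h1)]
    exact ih fun i hi => hz i (by simp [hi])

end Projection

theorem stmt2
    (n : ℕ) (hn : 0 < n) (C : ℕ → Set (EuclideanSpace ℝ (Fin n)))
    (hCne : ∀ i, (C i).Nonempty) (hCcl : ∀ i, IsClosed (C i))
    (hCcv : ∀ i, Convex ℝ (C i)) (hCint : (⋂ i, C i).Nonempty)
    (P : ℕ → EuclideanSpace ℝ (Fin n) → EuclideanSpace ℝ (Fin n))
    (hP : ∀ i x, P i x ∈ C i ∧ ∀ y ∈ C i, ‖x - P i x‖ ≤ ‖x - y‖)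
    (ι : List ℕ) (hι : ι ≠ [])
    (hιuniv : (⋂ i ∈ ι, C i) ≠ Set.univ)
    (s : EuclideanSpace ℝ (Fin n)) (hs : s ∈ ⋂ i ∈ ι, C i)
    (z : EuclideanSpace ℝ (Fin n)) :
    (‖projSeq P ι z - s‖ ≤ ‖z - s‖ ∧
      (‖projSeq P ι z - s‖ = ‖z - s‖ ↔ z ∈ ⋂ i ∈ ι, C i)) ∧
    (‖projSeq P ι z - s‖ ^ 2 ≤
      ‖z - s‖ ^ 2 - 2 * infDist s (⋂ i ∈ ι, C i)ᶜ * ‖projSeq P ι z - z‖) ∧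
    (∀ i ∈ ι, ‖projSeq P ι z - s‖ ^ 2 ≤
      ‖z - s‖ ^ 2 - 2 * infDist s (⋂ i ∈ ι, C i)ᶜ * infDist z (C i)) := by
  have hS : IsClosed (⋂ i ∈ ι, C i) := isClosed_biInter fun i _ => hCcl i
  have hr : 0 ≤ infDist s (⋂ i ∈ ι, C i)ᶜ := infDist_nonneg
  have hb : ∀ i ∈ ι, closedBall s (infDist s (⋂ i ∈ ι, C i)ᶜ) ⊆ C i := fun i hi =>
    (closedBall_infDist_compl_subset hS hs).trans (Set.biInter_subset_of_mem hi)
  have h2 := norm_sq_projSeq_add_le hCcv hP hr ι hb z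
  refine ⟨⟨?_, fun h => ?_, fun h => ?_⟩, by linarith, fun i hi => ?_⟩
  · refine (pow_le_pow_iff_left₀ (norm_nonneg _) (norm_nonneg _) two_ne_zero).1 ?_
    have := mul_nonneg hr (norm_nonneg (projSeq P ι z - z))
    linarith
  · exact Set.mem_iInter₂.2
      (mem_of_norm_le_projSeq hCcv hP ι (Set.mem_iInter₂.1 hs) z h.ge)
  · rw [projSeq_eq_self hP ι z (Set.mem_iInter₂.1 h)]
  · linarith [norm_sq_projSeq_add_infDist_le hCcv hP hr ι hb z i hi]
end
end

section
/- Let c ∈ ⋂ i, C i. Then for every iteration number k, ‖x^{k+1} − c‖² ≤ ‖x^k − c‖² − 2 · d(c, ℝⁿ \ ⋂ i, C i) · ‖x^{k+1} − x^k‖. -/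
/-!
Each metric projection `P i` moves no point away from a point of `C i`, so neither the
compositions `P[ι]` nor their convex combinations move points away from a point
`z ∈ ⋂ i, C i` (`norm_proj_sub_le`, `norm_projSeq_sub_le`, `norm_weighted_sum_sub_le`). Hence
`‖x^{k+1} - z‖ ≤ ‖x^k - z‖` for all such `z`.

With `r = d(c, (⋂ i, C i)ᶜ)`, the closed ball of radius `r` about `c` lies in the closed set
`⋂ i, C i` (if the complement is empty, `infDist` gives `r = 0`). If `x^{k+1} = x^k` the claim
is trivial; otherwise take `z = c + r u`, where `u` is the unit vector in the direction
`x^k - x^{k+1}`. Squaring and expanding both sides gives exactly the claim: the terms `r²`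
cancel and the cross terms combine to `-2 r ⟪x^k - x^{k+1}, u⟫`.
-/

open Metric Filter Topology

noncomputable section

/-- A weight function: finitely supported, values in `[0,1]`, supported on nonempty
lists (index vectors), with total sum `1`. -/
def IsWeightFn (w : List ℕ → ℝ) : Prop :=
  (∀ ι, 0 ≤ w ι) ∧ (∀ ι, w ι ≤ 1) ∧ (Function.support w).Finite ∧
    (∀ ι, w ι ≠ 0 → ι ≠ []) ∧ (∑ᶠ ι, w ι) = 1

section Helpers

variable {E : Type*} [NormedAddCommGroup E] [InnerProductSpace ℝ E]

lemma norm_proj_sub_le {K : Set E} (hK : Convex ℝ K) {y p z : E} (hp : p ∈ K)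
    (hmin : ∀ v ∈ K, ‖y - p‖ ≤ ‖y - v‖) (hz : z ∈ K) : ‖p - z‖ ≤ ‖y - z‖ := by
  have hinf : ‖y - p‖ = ⨅ v : K, ‖y - v‖ := by
    have : Nonempty K := ⟨⟨p, hp⟩⟩
    refine le_antisymm (le_ciInf fun v => hmin v v.2) ?_
    exact ciInf_le (f := fun v : K => ‖y - v‖)
      ⟨0, by rintro _ ⟨v, rfl⟩; exact norm_nonneg _⟩ ⟨p, hp⟩
  have hin := (norm_eq_iInf_iff_real_inner_le_zero hK hp).1 hinf z hz
  have hexp := norm_sub_sq_real (y - p) (z - p)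
  rw [sub_sub_sub_cancel_right, norm_sub_rev z p] at hexp
  refine le_of_sq_le_sq ?_ (norm_nonneg _)
  nlinarith [sq_nonneg ‖y - p‖]

lemma norm_projSeq_sub_le {C : ℕ → Set E} (hC : ∀ i, Convex ℝ (C i)) {P : ℕ → E → E}
    (hP : ∀ i x, P i x ∈ C i ∧ ∀ y ∈ C i, ‖x - P i x‖ ≤ ‖x - y‖) {z : E}
    (hz : z ∈ ⋂ i, C i) (ι : List ℕ) (y : E) : ‖projSeq P ι y - z‖ ≤ ‖y - z‖ := by
  induction ι generalizing y with
  | nil => simp [projSeq]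
  | cons i ι ih =>
    exact (ih (P i y)).trans
      (norm_proj_sub_le (hC i) (hP i y).1 (hP i y).2 (Set.mem_iInter.1 hz i))

lemma norm_weighted_sum_sub_le {w : List ℕ → ℝ} (hw : IsWeightFn w) {f : List ℕ → E}
    {z : E} {R : ℝ} (hf : ∀ ι, ‖f ι - z‖ ≤ R) : ‖(∑ᶠ ι, w ι • f ι) - z‖ ≤ R := by
  obtain ⟨h0, -, hfin, -, hsum⟩ := hw
  rw [finsum_eq_sum_of_support_subset (s := hfin.toFinset) _ (by simp)] at hsum
  rw [finsum_eq_sum_of_support_subset (s := hfin.toFinset) _ (by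
    simpa using Function.support_smul_subset_left w f)]
  rw [← mem_closedBall_iff_norm]
  exact (convex_closedBall z R).sum_mem (fun ι _ => h0 ι) hsum
    fun ι _ => mem_closedBall_iff_norm.2 (hf ι)

/-- If `b` is at least as close as `a` to every point of the ball of radius `r` about `c`,
then passing from `a` to `b` decreases the squared distance to `c` by at least
`2 r ‖b - a‖`. -/
lemma norm_sub_sq_le_of_closedBall {a b c : E} {r : ℝ} (hr : 0 ≤ r)
    (h : ∀ z ∈ closedBall c r, ‖b - z‖ ≤ ‖a - z‖) :
    ‖b - c‖ ^ 2 ≤ ‖a - c‖ ^ 2 - 2 * r * ‖b - a‖ := by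
  rcases eq_or_ne a b with rfl | hab
  · simp
  have hpos : 0 < ‖a - b‖ := norm_pos_iff.2 (sub_ne_zero.2 hab)
  -- `v = r u`, with `u` the unit vector in the direction `a - b`
  set v : E := (r / ‖a - b‖) • (a - b) with hv
  have hvn : ‖v‖ = r := by
    rw [hv, norm_smul, Real.norm_of_nonneg (by positivity)]
    field_simp
  have hle := h (c + v) (by simp [hvn])
  have hsq := pow_le_pow_left₀ (norm_nonneg _) hle 2
  rw [← sub_sub, ← sub_sub, norm_sub_sq_real, norm_sub_sq_real (a - c)] at hsq
  have hin : inner ℝ (a - c) v - inner ℝ (b - c) v = r * ‖a - b‖ := by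
    rw [← inner_sub_left, sub_sub_sub_cancel_right, hv, real_inner_smul_right,
      real_inner_self_eq_norm_sq]
    field_simp
  rw [norm_sub_rev b a]
  linarith

end Helpers

theorem stmt3
    (n : ℕ) (hn : 0 < n) (C : ℕ → Set (EuclideanSpace ℝ (Fin n)))
    (hCne : ∀ i, (C i).Nonempty) (hCcl : ∀ i, IsClosed (C i))
    (hCcv : ∀ i, Convex ℝ (C i)) (hCint : (⋂ i, C i).Nonempty)
    (P : ℕ → EuclideanSpace ℝ (Fin n) → EuclideanSpace ℝ (Fin n))
    (hP : ∀ i x, P i x ∈ C i ∧ ∀ y ∈ C i, ‖x - P i x‖ ≤ ‖x - y‖)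
    (w : ℕ → List ℕ → ℝ) (hw : ∀ k, IsWeightFn (w k))
    (x : ℕ → EuclideanSpace ℝ (Fin n))
    (hx : ∀ k, x (k + 1) = ∑ᶠ ι, w k ι • projSeq P ι (x k))
    (c : EuclideanSpace ℝ (Fin n)) (hc : c ∈ ⋂ i, C i) (k : ℕ) :
    ‖x (k + 1) - c‖ ^ 2 ≤
      ‖x k - c‖ ^ 2 - 2 * infDist c (⋂ i, C i)ᶜ * ‖x (k + 1) - x k‖ := by
  refine norm_sub_sq_le_of_closedBall infDist_nonneg fun z hz => ?_
  have hzC : z ∈ ⋂ i, C i :=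
    (isClosed_iInter hCcl).closure_subset (closedBall_infDist_compl_subset_closure hc hz)
  rw [hx k]
  exact norm_weighted_sum_sub_le (hw k) fun ι => norm_projSeq_sub_le hCcv hP hzC ι (x k)
end
end

section
/- For every index j, every iteration number r, and every c ∈ ⋂ i, C i: ‖x^r − c‖² ≤ ‖x^0 − c‖² − 2 · d(c, ℝⁿ \ ⋂ i, C i) · ∑_{k=0}^{r−1} ∑_{ι ∈ I⟨j⟩} d(x^k, C j) · w^k(ι). Consequently, if d(c, ℝⁿ \ ⋂ i, C i) > 0 for some c ∈ ⋂ i, C i, then for every index j the series ∑_{k=0}^∞ ∑_{ι ∈ I⟨j⟩} d(x^k, C j) · w^k(ι) converges (is finite). -/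
/-!
Let `K = ⋂ i, C i`, `c ∈ K` and `ρ = infDist c Kᶜ`, so that the open ball of radius `ρ` about `c`
lies in every `C i`. If `P y` is the projection of `y` onto `C i`, the variational inequality
tested at points `c + t • (y - P y) / ‖y - P y‖` with `t < ρ` gives
`‖P y - c‖² ≤ ‖y - c‖² - 2 ρ ‖y - P y‖` (`proj_step`): every move of length `s` decreases the
squared distance to `c` by at least `2 ρ s`. Along an index vector containing `j`, the moves up to
the first occurrence of `j` lead from `y` to a point of `C j`, so by the triangle inequality their
total length is at least `infDist y (C j)` (`projSeq_step_of_mem`). Convexity of the squared norm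
averages these estimates over the weights (`average_step`), and summing over the iterations gives
the inequality. When `ρ > 0`, it bounds the partial sums of a series with nonnegative terms.
-/

open Metric Filter Topology

noncomputable section

section Helpers

theorem mem_of_dist_lt_infDist_compl {E : Type*} [PseudoMetricSpace E] {K : Set E} {c z : E}
    (h : dist c z < infDist c Kᶜ) :
    z ∈ K := by
  by_contra hz
  exact absurd (infDist_le_dist_of_mem (show z ∈ Kᶜ from hz)) (not_le.mpr h)

variable {E : Type*} [NormedAddCommGroup E] [InnerProductSpace ℝ E]

/-- A point of `D` nearest to `y` satisfies the variational inequality of the projection. -/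
theorem inner_le_zero_of_nearest {D : Set E} (hD : Convex ℝ D) {y p : E} (hp : p ∈ D)
    (hmin : ∀ z ∈ D, ‖y - p‖ ≤ ‖y - z‖) {z : E} (hz : z ∈ D) :
    inner ℝ (y - p) (z - p) ≤ 0 := by
  refine (norm_eq_iInf_iff_real_inner_le_zero hD hp).1 ?_ z hz
  have : Nonempty D := ⟨⟨p, hp⟩⟩
  refine le_antisymm (le_ciInf fun z => hmin z z.2) ?_
  exact ciInf_le (f := fun z : D => ‖y - z‖)
    ⟨0, by rintro _ ⟨z, rfl⟩; exact norm_nonneg _⟩ ⟨p, hp⟩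

/-- Projecting onto a convex set that contains the ball of radius `infDist c Kᶜ` about `c`
decreases the squared distance to `c` in proportion to the length of the move. -/
theorem proj_step {K D : Set E} (hD : Convex ℝ D) (hKD : K ⊆ D) {c y p : E} (hc : c ∈ K)
    (hp : p ∈ D) (hmin : ∀ z ∈ D, ‖y - p‖ ≤ ‖y - z‖) :
    ‖p - c‖ ^ 2 ≤ ‖y - c‖ ^ 2 - 2 * infDist c Kᶜ * ‖y - p‖ := by
  set ρ := infDist c Kᶜ with hρ
  have hexp : ‖y - c‖ ^ 2 = ‖y - p‖ ^ 2 - 2 * inner ℝ (y - p) (c - p) + ‖p - c‖ ^ 2 := by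
    rw [← norm_sub_rev c p, ← norm_sub_sq_real]
    congr 2
    abel
  suffices h : inner ℝ (y - p) (c - p) ≤ -(ρ * ‖y - p‖) by
    nlinarith [sq_nonneg ‖y - p‖]
  rcases eq_or_ne (y - p) 0 with h0 | h0
  · simp [h0]
  have hpos : 0 < ‖y - p‖ := norm_pos_iff.2 h0
  -- `ρ` itself is reached only as a limit: the closed ball of radius `ρ` need not lie in `K`.
  have ht : ∀ t, 0 ≤ t → t < ρ → inner ℝ (y - p) (c - p) ≤ -(t * ‖y - p‖) := by
    intro t ht0 htρ
    have hmem : c + (t / ‖y - p‖) • (y - p) ∈ D := by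
      apply hKD
      apply mem_of_dist_lt_infDist_compl
      rw [dist_self_add_right, norm_smul, Real.norm_eq_abs, abs_of_nonneg (by positivity),
        div_mul_cancel₀ _ hpos.ne']
      exact htρ
    have h := inner_le_zero_of_nearest hD hp hmin hmem
    rw [add_sub_right_comm, inner_add_right, inner_smul_right, real_inner_self_eq_norm_sq] at h
    have e : t / ‖y - p‖ * ‖y - p‖ ^ 2 = t * ‖y - p‖ := by field_simp
    linarith
  have hin := inner_le_zero_of_nearest hD hp hmin (hKD hc)
  have hle : ρ ≤ -inner ℝ (y - p) (c - p) / ‖y - p‖ := by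
    refine le_of_forall_lt_imp_le_of_dense fun t htρ => ?_
    rw [le_div_iff₀ hpos]
    rcases le_total 0 t with h | h
    · linarith [ht t h htρ]
    · nlinarith
  rw [le_div_iff₀ hpos] at hle
  linarith

variable {C : ℕ → Set E} {P : ℕ → E → E}

theorem projSeq_step (hC : ∀ i, Convex ℝ (C i))
    (hP : ∀ i x, P i x ∈ C i ∧ ∀ y ∈ C i, ‖x - P i x‖ ≤ ‖x - y‖)
    {c : E} (hc : c ∈ ⋂ i, C i) (ι : List ℕ) (y : E) :
    ‖projSeq P ι y - c‖ ^ 2 ≤ ‖y - c‖ ^ 2 := by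
  induction ι generalizing y with
  | nil => exact le_rfl
  | cons i ι ih =>
    have h := proj_step (hC i) (Set.iInter_subset C i) hc (hP i y).1 (hP i y).2
    have h' : 0 ≤ 2 * infDist c (⋂ i, C i)ᶜ * ‖y - P i y‖ :=
      mul_nonneg (mul_nonneg zero_le_two infDist_nonneg) (norm_nonneg _)
    exact (ih (P i y)).trans (by linarith)

/-- Passing through `C j` costs at least `infDist y (C j)` in total length of the moves. -/
theorem projSeq_step_of_mem (hC : ∀ i, Convex ℝ (C i))
    (hP : ∀ i x, P i x ∈ C i ∧ ∀ y ∈ C i, ‖x - P i x‖ ≤ ‖x - y‖)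
    {c : E} (hc : c ∈ ⋂ i, C i) {j : ℕ} (ι : List ℕ) (hj : j ∈ ι) (y : E) :
    ‖projSeq P ι y - c‖ ^ 2 ≤
      ‖y - c‖ ^ 2 - 2 * infDist c (⋂ i, C i)ᶜ * infDist y (C j) := by
  have hρ : 0 ≤ 2 * infDist c (⋂ i, C i)ᶜ := mul_nonneg zero_le_two infDist_nonneg
  induction ι generalizing y with
  | nil => simp at hj
  | cons i ι ih =>
    have h := proj_step (hC i) (Set.iInter_subset C i) hc (hP i y).1 (hP i y).2
    rcases List.mem_cons.1 hj with rfl | hj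
    · have h1 : ‖projSeq P (j :: ι) y - c‖ ^ 2 ≤ ‖P j y - c‖ ^ 2 :=
        projSeq_step hC hP hc ι (P j y)
      have h2 : infDist y (C j) ≤ ‖y - P j y‖ := by
        rw [← dist_eq_norm]
        exact infDist_le_dist_of_mem (hP j y).1
      have h3 := mul_le_mul_of_nonneg_left h2 hρ
      linarith
    · have h1 : ‖projSeq P (i :: ι) y - c‖ ^ 2 ≤
          ‖P i y - c‖ ^ 2 - 2 * infDist c (⋂ i, C i)ᶜ * infDist (P i y) (C j) :=
        ih hj (P i y)
      have h2 : infDist y (C j) ≤ infDist (P i y) (C j) + ‖y - P i y‖ := by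
        rw [← dist_eq_norm]
        exact infDist_le_infDist_add_dist
      have h3 := mul_le_mul_of_nonneg_left h2 hρ
      linarith

/-- The decrease of the squared distance to `c` in one iteration. -/
theorem average_step (hC : ∀ i, Convex ℝ (C i))
    (hP : ∀ i x, P i x ∈ C i ∧ ∀ y ∈ C i, ‖x - P i x‖ ≤ ‖x - y‖)
    {w : List ℕ → ℝ} (hw : IsWeightFn w) {c : E} (hc : c ∈ ⋂ i, C i) (j : ℕ) (y : E) :
    ‖(∑ᶠ ι, w ι • projSeq P ι y) - c‖ ^ 2 ≤ ‖y - c‖ ^ 2 -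
      2 * infDist c (⋂ i, C i)ᶜ * ∑ᶠ ι ∈ {l : List ℕ | j ∈ l}, infDist y (C j) * w ι := by
  classical
  obtain ⟨hw0, -, hfin, -, hsum⟩ := hw
  set S := hfin.toFinset with hS
  have hsupp : ∀ ι, w ι ≠ 0 → ι ∈ S := fun ι h => by simpa [hS] using h
  have e1 : ∑ᶠ ι, w ι • projSeq P ι y = ∑ ι ∈ S, w ι • projSeq P ι y :=
    finsum_eq_sum_of_support_subset _ fun ι h => hsupp ι fun h0 => h (by simp [h0])
  have e2 : ∑ ι ∈ S, w ι = 1 := by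
    rw [← hsum]
    exact (finsum_eq_sum_of_support_subset _ fun ι h => hsupp ι h).symm
  have e3 : ∑ᶠ ι ∈ {l : List ℕ | j ∈ l}, infDist y (C j) * w ι =
      ∑ ι ∈ S, if j ∈ ι then infDist y (C j) * w ι else 0 := by
    simp only [Set.mem_ofPred_eq, finsum_eq_if]
    exact finsum_eq_sum_of_support_subset _ fun ι h => hsupp ι fun h0 => h (by simp [h0])
  have e4 : (∑ ι ∈ S, w ι • projSeq P ι y) - c = ∑ ι ∈ S, w ι • (projSeq P ι y - c) := by
    simp only [smul_sub, Finset.sum_sub_distrib, ← Finset.sum_smul, e2, one_smul]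
  have hconv : ConvexOn ℝ Set.univ fun v : E => ‖v‖ ^ 2 :=
    convexOn_univ_norm.pow (fun _ _ => norm_nonneg _) 2
  rw [e1, e3, e4]
  calc ‖∑ ι ∈ S, w ι • (projSeq P ι y - c)‖ ^ 2
      ≤ ∑ ι ∈ S, w ι • ‖projSeq P ι y - c‖ ^ 2 :=
        hconv.map_sum_le (fun ι _ => hw0 ι) e2 fun _ _ => Set.mem_univ _
    _ ≤ ∑ ι ∈ S, (w ι * ‖y - c‖ ^ 2 - 2 * infDist c (⋂ i, C i)ᶜ *
          if j ∈ ι then infDist y (C j) * w ι else 0) := by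
        refine Finset.sum_le_sum fun ι _ => ?_
        rw [smul_eq_mul]
        split_ifs with hj
        · have h := mul_le_mul_of_nonneg_left
            (projSeq_step_of_mem hC hP hc ι hj y) (hw0 ι)
          linarith
        · have h := mul_le_mul_of_nonneg_left (projSeq_step hC hP hc ι y) (hw0 ι)
          linarith
    _ = _ := by
        rw [Finset.sum_sub_distrib, ← Finset.sum_mul, e2, one_mul, ← Finset.mul_sum]

end Helpers

theorem stmt4
    (n : ℕ) (hn : 0 < n) (C : ℕ → Set (EuclideanSpace ℝ (Fin n)))
    (hCne : ∀ i, (C i).Nonempty) (hCcl : ∀ i, IsClosed (C i))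
    (hCcv : ∀ i, Convex ℝ (C i)) (hCint : (⋂ i, C i).Nonempty)
    (P : ℕ → EuclideanSpace ℝ (Fin n) → EuclideanSpace ℝ (Fin n))
    (hP : ∀ i x, P i x ∈ C i ∧ ∀ y ∈ C i, ‖x - P i x‖ ≤ ‖x - y‖)
    (w : ℕ → List ℕ → ℝ) (hw : ∀ k, IsWeightFn (w k))
    (x : ℕ → EuclideanSpace ℝ (Fin n))
    (hx : ∀ k, x (k + 1) = ∑ᶠ ι, w k ι • projSeq P ι (x k))
    :
    (∀ (j r : ℕ) (c : EuclideanSpace ℝ (Fin n)), c ∈ ⋂ i, C i →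
      ‖x r - c‖ ^ 2 ≤ ‖x 0 - c‖ ^ 2 -
        2 * infDist c (⋂ i, C i)ᶜ *
          ∑ k ∈ Finset.range r,
            ∑ᶠ ι ∈ {l : List ℕ | j ∈ l}, infDist (x k) (C j) * w k ι) ∧
    ((∃ c ∈ ⋂ i, C i, 0 < infDist c (⋂ i, C i)ᶜ) →
      ∀ j : ℕ,
        Summable fun k => ∑ᶠ ι ∈ {l : List ℕ | j ∈ l}, infDist (x k) (C j) * w k ι) := by
  have main : ∀ (j r : ℕ) (c : EuclideanSpace ℝ (Fin n)), c ∈ ⋂ i, C i →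
      ‖x r - c‖ ^ 2 ≤ ‖x 0 - c‖ ^ 2 -
        2 * infDist c (⋂ i, C i)ᶜ *
          ∑ k ∈ Finset.range r,
            ∑ᶠ ι ∈ {l : List ℕ | j ∈ l}, infDist (x k) (C j) * w k ι := by
    intro j r c hc
    induction r with
    | zero => simp
    | succ r ih =>
      rw [Finset.sum_range_succ, hx r]
      have h := average_step hCcv hP (hw r) hc j (x r)
      linarith
  refine ⟨main, ?_⟩
  rintro ⟨c, hc, hρ⟩ j
  refine summable_of_sum_range_le (c := ‖x 0 - c‖ ^ 2 / (2 * infDist c (⋂ i, C i)ᶜ)) ?_ ?_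
  · exact fun k => finsum_nonneg fun ι => finsum_nonneg fun _ =>
      mul_nonneg infDist_nonneg ((hw k).1 ι)
  · intro r
    rw [le_div_iff₀ (by positivity)]
    have h := main j r c hc
    nlinarith [sq_nonneg ‖x r - c‖]
end
end

section
/- First Convergence Theorem: Suppose ⋂ i, C i contains an n-dimensional simplex (equivalently, being convex, it has nonempty interior in ℝⁿ). Then the sequence (x^k) converges to some limit L ∈ ℝⁿ, and L ∈ C j for every index j for which the series ∑_{k=0}^∞ ∑_{ι ∈ I⟨j⟩} w^k(ι) diverges (i.e. the nonnegative sequence k ↦ ∑_{ι ∈ I⟨j⟩} w^k(ι) is not summable). In particular, if this series diverges for every index j with C j ≠ ℝⁿ, then (x^k) converges to a point of ⋂ i, C i. -/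
/-!
Fix a closed ball `closedBall z r` (`r > 0`) inside every `C i`. Testing the obtuse-angle
characterization of the projection against the boundary point of that ball in the direction
`x - P i x` gives `2 r ‖x - P i x‖ ≤ ‖x - z‖² - ‖P i x - z‖²`
(`two_mul_norm_sub_proj_le`). Summing along an index vector, the length `pathLen P ι x` of the
polygonal path from `x` to `P[ι](x)` satisfies the same bound (`two_mul_pathLen_le`), and by
convexity of `‖·‖²` the averaged length `a k = ∑ w^k(ι) pathLen P ι (x k)` satisfies
`2 r a k ≤ ‖x k - z‖² - ‖x (k+1) - z‖²`. This telescopes, so `a` is summable.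

Since `‖x k - x (k+1)‖ ≤ a k`, the sequence has finite length and converges to some `L`. A path
whose index vector contains `j` visits `C j`, so `infDist (x k) (C j)` times the total weight of
those index vectors is at most `a k`. If `L ∉ C j`, the distances `infDist (x k) (C j)` are
eventually bounded below, and these weights are summable.
-/

open Metric Filter Topology

noncomputable section

/-- The length of the polygonal path `x, P ι₁ x, P ι₂ (P ι₁ x), …, P[ι](x)`. -/
def pathLen {E : Type*} [NormedAddCommGroup E] (P : ℕ → E → E) : List ℕ → E → ℝ
  | [], _ => 0
  | i :: ι, x => ‖x - P i x‖ + pathLen P ι (P i x)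

section PathLen

variable {E : Type*} [NormedAddCommGroup E]

lemma pathLen_nonneg (P : ℕ → E → E) (ι : List ℕ) (x : E) : 0 ≤ pathLen P ι x := by
  induction ι generalizing x with
  | nil => exact le_rfl
  | cons i ι ih => exact add_nonneg (norm_nonneg _) (ih _)

lemma norm_sub_projSeq_le (P : ℕ → E → E) (ι : List ℕ) (x : E) :
    ‖x - projSeq P ι x‖ ≤ pathLen P ι x := by
  induction ι generalizing x with
  | nil => simp [projSeq, pathLen]
  | cons i ι ih =>
    calc ‖x - projSeq P ι (P i x)‖
        ≤ ‖x - P i x‖ + ‖P i x - projSeq P ι (P i x)‖ := norm_sub_le_norm_sub_add_norm_sub _ _ _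
      _ ≤ pathLen P (i :: ι) x := add_le_add le_rfl (ih _)

/-- A path whose index vector contains `j` visits `C j`. -/
lemma infDist_le_pathLen {C : ℕ → Set E} {P : ℕ → E → E} (hP : ∀ i x, P i x ∈ C i)
    {j : ℕ} {ι : List ℕ} (hj : j ∈ ι) (x : E) : infDist x (C j) ≤ pathLen P ι x := by
  induction ι generalizing x with
  | nil => simp at hj
  | cons i ι ih =>
    by_cases hji : j = i
    · subst hji
      calc infDist x (C j) ≤ dist x (P j x) := infDist_le_dist_of_mem (hP j x)
        _ ≤ pathLen P (j :: ι) x := by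
          rw [dist_eq_norm]
          exact le_add_of_nonneg_right (pathLen_nonneg _ _ _)
    · have hj' : j ∈ ι := (List.mem_cons.1 hj).resolve_left hji
      calc infDist x (C j) ≤ infDist (P i x) (C j) + dist x (P i x) := infDist_le_infDist_add_dist
        _ ≤ pathLen P ι (P i x) + ‖x - P i x‖ := by
          rw [dist_eq_norm]
          exact add_le_add (ih hj' _) le_rfl
        _ = pathLen P (i :: ι) x := add_comm _ _

end PathLen

section Inner

variable {E : Type*} [NormedAddCommGroup E] [InnerProductSpace ℝ E]

/-- Projecting `x` to `p ∈ K` when `K` contains a ball around `z` decreases the squared distance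
to `z` by an amount linear in the step length, not only quadratic. -/
lemma two_mul_norm_sub_proj_le {K : Set E} (hK : Convex ℝ K) {z : E} {r : ℝ} (hr : 0 ≤ r)
    (hball : closedBall z r ⊆ K) {x p : E} (hp : p ∈ K) (hmin : ∀ y ∈ K, ‖x - p‖ ≤ ‖x - y‖) :
    2 * r * ‖x - p‖ ≤ ‖x - z‖ ^ 2 - ‖p - z‖ ^ 2 := by
  have hangle : ∀ y ∈ K, inner ℝ (x - p) (y - p) ≤ 0 := by
    refine (norm_eq_iInf_iff_real_inner_le_zero hK hp).1 (le_antisymm ?_ ?_)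
    · have : Nonempty K := ⟨⟨p, hp⟩⟩
      exact le_ciInf fun y => hmin y y.2
    · exact ciInf_le (f := fun y : K => ‖x - y‖)
        ⟨0, by rintro _ ⟨y, rfl⟩; exact norm_nonneg _⟩ ⟨p, hp⟩
  -- For `x = p` the coefficient is `r / 0 = 0` and the test point is `z`, which is still fine.
  have hmem : z + (r / ‖x - p‖) • (x - p) ∈ K := by
    apply hball
    rw [mem_closedBall, dist_eq_norm, add_sub_cancel_left, norm_smul, Real.norm_eq_abs,
      abs_of_nonneg (by positivity)]
    rcases eq_or_ne ‖x - p‖ 0 with h | h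
    · simpa [h] using hr
    · exact (div_mul_cancel₀ r h).le
  have h1 := hangle _ hmem
  have h2 : z + (r / ‖x - p‖) • (x - p) - p = (r / ‖x - p‖) • (x - p) - (p - z) := by abel
  rw [h2, inner_sub_right, inner_smul_right, real_inner_self_eq_norm_sq] at h1
  have h3 : r / ‖x - p‖ * ‖x - p‖ ^ 2 = r * ‖x - p‖ := by
    rcases eq_or_ne ‖x - p‖ 0 with h | h
    · simp [h]
    · field_simp
  have h4 : ‖x - z‖ ^ 2 = ‖x - p‖ ^ 2 + 2 * inner ℝ (x - p) (p - z) + ‖p - z‖ ^ 2 := by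
    rw [← norm_add_sq_real, sub_add_sub_cancel]
  nlinarith [sq_nonneg ‖x - p‖]

lemma two_mul_pathLen_le {C : ℕ → Set E} (hC : ∀ i, Convex ℝ (C i)) {z : E} {r : ℝ} (hr : 0 ≤ r)
    (hball : ∀ i, closedBall z r ⊆ C i) {P : ℕ → E → E}
    (hP : ∀ i x, P i x ∈ C i ∧ ∀ y ∈ C i, ‖x - P i x‖ ≤ ‖x - y‖) (ι : List ℕ) (x : E) :
    2 * r * pathLen P ι x ≤ ‖x - z‖ ^ 2 - ‖projSeq P ι x - z‖ ^ 2 := by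
  induction ι generalizing x with
  | nil => simp [projSeq, pathLen]
  | cons i ι ih =>
    have h1 := two_mul_norm_sub_proj_le (hC i) hr (hball i) (hP i x).1 (hP i x).2
    have h2 := ih (P i x)
    change 2 * r * (‖x - P i x‖ + pathLen P ι (P i x))
      ≤ ‖x - z‖ ^ 2 - ‖projSeq P ι (P i x) - z‖ ^ 2
    linarith

/-- Jensen's inequality for the squared distance to `z`. -/
lemma norm_sum_smul_sub_sq_le {α : Type*} (s : Finset α) (c : α → ℝ) (p : α → E)
    (hc : ∀ a ∈ s, 0 ≤ c a) (hc1 : ∑ a ∈ s, c a = 1) (z : E) :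
    ‖∑ a ∈ s, c a • p a - z‖ ^ 2 ≤ ∑ a ∈ s, c a * ‖p a - z‖ ^ 2 := by
  have hconv : ConvexOn ℝ Set.univ fun y : E => ‖y‖ ^ 2 :=
    convexOn_univ_norm.pow (fun _ _ => norm_nonneg _) 2
  have h := hconv.map_sum_le hc hc1 (p := fun a => p a - z) fun _ _ => Set.mem_univ _
  simpa [smul_sub, Finset.sum_sub_distrib, ← Finset.sum_smul, hc1] using h

end Inner

theorem stmt5
    (n : ℕ) (hn : 0 < n) (C : ℕ → Set (EuclideanSpace ℝ (Fin n)))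
    (hCne : ∀ i, (C i).Nonempty) (hCcl : ∀ i, IsClosed (C i))
    (hCcv : ∀ i, Convex ℝ (C i)) (hCint : (⋂ i, C i).Nonempty)
    (P : ℕ → EuclideanSpace ℝ (Fin n) → EuclideanSpace ℝ (Fin n))
    (hP : ∀ i x, P i x ∈ C i ∧ ∀ y ∈ C i, ‖x - P i x‖ ≤ ‖x - y‖)
    (w : ℕ → List ℕ → ℝ) (hw : ∀ k, IsWeightFn (w k))
    (x : ℕ → EuclideanSpace ℝ (Fin n))
    (hx : ∀ k, x (k + 1) = ∑ᶠ ι, w k ι • projSeq P ι (x k))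
    (hdim : (interior (⋂ i, C i)).Nonempty) :
    ∃ L : EuclideanSpace ℝ (Fin n),
      Tendsto x atTop (𝓝 L) ∧
      (∀ j : ℕ, ¬ Summable (fun k => ∑ᶠ ι ∈ {l : List ℕ | j ∈ l}, w k ι) → L ∈ C j) ∧
      ((∀ j : ℕ, C j ≠ Set.univ →
          ¬ Summable (fun k => ∑ᶠ ι ∈ {l : List ℕ | j ∈ l}, w k ι)) →
        L ∈ ⋂ i, C i) := by
  classical
  obtain ⟨z, hz⟩ := hdim
  obtain ⟨r, hr, hzr⟩ := nhds_basis_closedBall.mem_iff.1 (mem_interior_iff_mem_nhds.1 hz)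
  have hball : ∀ i, closedBall z r ⊆ C i := fun i => hzr.trans (Set.iInter_subset C i)
  have hfin : ∀ k, (Function.support (w k)).Finite := fun k => (hw k).2.2.1
  let s : ℕ → Finset (List ℕ) := fun k => (hfin k).toFinset
  have hs : ∀ k, Function.support (w k) ⊆ s k := fun k => by simp [s]
  have hw0 : ∀ k ι, 0 ≤ w k ι := fun k => (hw k).1
  have hw1 : ∀ k, ∑ ι ∈ s k, w k ι = 1 := fun k => by
    rw [← finsum_eq_sum_of_support_subset _ (hs k)]
    exact (hw k).2.2.2.2
  have hxs : ∀ k, x (k + 1) = ∑ ι ∈ s k, w k ι • projSeq P ι (x k) := fun k => by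
    rw [hx k]
    exact finsum_eq_sum_of_support_subset _ ((Function.support_smul_subset_left _ _).trans (hs k))
  have hmass : ∀ j k, ∑ᶠ ι ∈ {l : List ℕ | j ∈ l}, w k ι
      = ∑ ι ∈ s k, Set.indicator {l : List ℕ | j ∈ l} (w k) ι := fun j k => by
    rw [finsum_mem_def]
    refine finsum_eq_sum_of_support_subset _ (Set.Subset.trans ?_ (hs k))
    rw [Set.support_indicator]
    exact Set.inter_subset_right
  let a : ℕ → ℝ := fun k => ∑ ι ∈ s k, w k ι * pathLen P ι (x k)
  have ha0 : ∀ k, 0 ≤ a k := fun k =>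
    Finset.sum_nonneg fun ι _ => mul_nonneg (hw0 k ι) (pathLen_nonneg _ _ _)
  have hdec : ∀ k, 2 * r * a k ≤ ‖x k - z‖ ^ 2 - ‖x (k + 1) - z‖ ^ 2 := fun k => by
    have h1 := norm_sum_smul_sub_sq_le (s k) (w k) (fun ι => projSeq P ι (x k))
      (fun ι _ => hw0 k ι) (hw1 k) z
    rw [← hxs k] at h1
    have h2 : 2 * r * a k
        ≤ ∑ ι ∈ s k, w k ι * (‖x k - z‖ ^ 2 - ‖projSeq P ι (x k) - z‖ ^ 2) := by
      simp only [a, Finset.mul_sum]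
      refine Finset.sum_le_sum fun ι _ => ?_
      have h := mul_le_mul_of_nonneg_left
        (two_mul_pathLen_le hCcv hr.le hball hP ι (x k)) (hw0 k ι)
      linarith
    simp only [mul_sub, Finset.sum_sub_distrib, ← Finset.sum_mul, hw1 k, one_mul] at h2
    linarith
  have hasum : Summable a := by
    refine summable_of_sum_range_le (c := ‖x 0 - z‖ ^ 2 / (2 * r)) ha0 fun N => ?_
    rw [le_div_iff₀ (by positivity), mul_comm, Finset.mul_sum]
    calc ∑ k ∈ Finset.range N, 2 * r * a k
        ≤ ∑ k ∈ Finset.range N, (‖x k - z‖ ^ 2 - ‖x (k + 1) - z‖ ^ 2) :=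
          Finset.sum_le_sum fun k _ => hdec k
      _ = ‖x 0 - z‖ ^ 2 - ‖x N - z‖ ^ 2 := Finset.sum_range_sub' (fun k => ‖x k - z‖ ^ 2) N
      _ ≤ ‖x 0 - z‖ ^ 2 := sub_le_self _ (by positivity)
  have hstep : ∀ k, dist (x k) (x (k + 1)) ≤ a k := fun k => by
    have h1 : x k - x (k + 1) = ∑ ι ∈ s k, w k ι • (x k - projSeq P ι (x k)) := by
      simp only [smul_sub, Finset.sum_sub_distrib, ← Finset.sum_smul, hw1 k, one_smul, hxs k]
    rw [dist_eq_norm, h1]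
    refine (norm_sum_le _ _).trans (Finset.sum_le_sum fun ι _ => ?_)
    rw [norm_smul, Real.norm_eq_abs, abs_of_nonneg (hw0 k ι)]
    exact mul_le_mul_of_nonneg_left (norm_sub_projSeq_le _ _ _) (hw0 k ι)
  obtain ⟨L, hL⟩ := cauchySeq_tendsto_of_complete (cauchySeq_of_dist_le_of_summable a hstep hasum)
  have hmem : ∀ j : ℕ, ¬ Summable (fun k => ∑ᶠ ι ∈ {l : List ℕ | j ∈ l}, w k ι) → L ∈ C j := by
    intro j hj
    by_contra hLj
    apply hj
    have hpos : 0 < infDist L (C j) := ((hCcl j).notMem_iff_infDist_pos (hCne j)).1 hLj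
    have htend : Tendsto (fun k => infDist (x k) (C j)) atTop (𝓝 (infDist L (C j))) :=
      ((continuous_infDist_pt (C j)).tendsto L).comp hL
    obtain ⟨N, hN⟩ := eventually_atTop.1 (htend.eventually_const_lt (half_lt_self hpos))
    simp only [hmass]
    rw [← summable_nat_add_iff N]
    refine Summable.of_nonneg_of_le (fun k => Finset.sum_nonneg fun ι _ =>
      Set.indicator_nonneg (fun ι _ => hw0 _ ι) ι) (fun k => ?_)
      (((summable_nat_add_iff N).2 hasum).mul_left (infDist L (C j) / 2)⁻¹)
    rw [le_inv_mul_iff₀ (half_pos hpos), Finset.mul_sum]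
    refine Finset.sum_le_sum fun ι _ => ?_
    by_cases hι : j ∈ ι
    · rw [Set.indicator_of_mem (show ι ∈ {l : List ℕ | j ∈ l} from hι), mul_comm]
      exact mul_le_mul_of_nonneg_left ((hN (k + N) (Nat.le_add_left _ _)).le.trans
        (infDist_le_pathLen (fun i y => (hP i y).1) hι _)) (hw0 _ _)
    · rw [Set.indicator_of_notMem (show ι ∉ {l : List ℕ | j ∈ l} from hι), mul_zero]
      exact mul_nonneg (hw0 _ _) (pathLen_nonneg _ _ _)
  refine ⟨L, hL, hmem, fun h => Set.mem_iInter.2 fun i => ?_⟩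
  by_cases hi : C i = Set.univ
  · rw [hi]
    exact Set.mem_univ L
  · exact hmem i (h i hi)
end
end

section
/- If some subsequence of (x^k) converges to a point c ∈ ⋂ i, C i, then the whole sequence (x^k) converges to c. -/
/-!
The sequence is Fejér monotone with respect to `⋂ i, C i`: each projection onto a convex set
containing `c` does not increase the distance to `c` (`dist_proj_le`), hence neither does a
composition of projections (`dist_projSeq_le`), and a convex combination of points of the closed
ball of radius `dist (x k) c` around `c` stays in that ball. So `dist (x k) c` is antitone in `k`,
and an antitone real sequence with a subsequence tending to `0` tends to `0`.
-/

open Metric Filter Topology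

noncomputable section

/-- Expanding `‖(u - v) - (c - v)‖ ^ 2`, this follows from the obtuse-angle characterization
`⟪u - v, c - v⟫ ≤ 0` of the nearest point `v` to `u`. -/
theorem dist_proj_le {E : Type*} [NormedAddCommGroup E] [InnerProductSpace ℝ E] {K : Set E}
    (hK : Convex ℝ K) {u v c : E} (hv : v ∈ K) (hmin : ∀ y ∈ K, ‖u - v‖ ≤ ‖u - y‖)
    (hc : c ∈ K) : dist v c ≤ dist u c := by
  have hinf : ‖u - v‖ = ⨅ y : K, ‖u - y‖ := by
    have : Nonempty K := ⟨⟨v, hv⟩⟩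
    refine le_antisymm (le_ciInf fun y => hmin y y.2) ?_
    exact ciInf_le (f := fun y : K => ‖u - y‖)
      ⟨0, by rintro _ ⟨y, rfl⟩; exact norm_nonneg _⟩ ⟨v, hv⟩
  have hinner := (norm_eq_iInf_iff_real_inner_le_zero hK hv).1 hinf c hc
  have hsq := norm_sub_sq_real (u - v) (c - v)
  rw [sub_sub_sub_cancel_right] at hsq
  rw [dist_comm v c, dist_eq_norm, dist_eq_norm]
  refine (sq_le_sq₀ (norm_nonneg _) (norm_nonneg _)).1 ?_
  nlinarith [sq_nonneg ‖u - v‖]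

theorem dist_projSeq_le {α : Type*} [PseudoMetricSpace α] {P : ℕ → α → α} {c : α}
    (h : ∀ i y, dist (P i y) c ≤ dist y c) (ι : List ℕ) (y : α) :
    dist (projSeq P ι y) c ≤ dist y c := by
  induction ι generalizing y with
  | nil => exact le_rfl
  | cons i ι ih => exact (ih (P i y)).trans (h i y)

theorem stmt6
    (n : ℕ) (hn : 0 < n) (C : ℕ → Set (EuclideanSpace ℝ (Fin n)))
    (hCne : ∀ i, (C i).Nonempty) (hCcl : ∀ i, IsClosed (C i))
    (hCcv : ∀ i, Convex ℝ (C i)) (hCint : (⋂ i, C i).Nonempty)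
    (P : ℕ → EuclideanSpace ℝ (Fin n) → EuclideanSpace ℝ (Fin n))
    (hP : ∀ i x, P i x ∈ C i ∧ ∀ y ∈ C i, ‖x - P i x‖ ≤ ‖x - y‖)
    (w : ℕ → List ℕ → ℝ) (hw : ∀ k, IsWeightFn (w k))
    (x : ℕ → EuclideanSpace ℝ (Fin n))
    (hx : ∀ k, x (k + 1) = ∑ᶠ ι, w k ι • projSeq P ι (x k))
    (c : EuclideanSpace ℝ (Fin n)) (hc : c ∈ ⋂ i, C i)
    (φ : ℕ → ℕ) (hφ : StrictMono φ)
    (hsub : Tendsto (x ∘ φ) atTop (𝓝 c)) :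
    Tendsto x atTop (𝓝 c) := by
  have hproj : ∀ i y, dist (P i y) c ≤ dist y c := fun i y =>
    dist_proj_le (hCcv i) (hP i y).1 (hP i y).2 (Set.mem_iInter.1 hc i)
  have hanti : Antitone fun k => dist (x k) c := by
    refine antitone_nat_of_succ_le fun k => ?_
    obtain ⟨h₀, -, -, -, h₁⟩ := hw k
    rw [hx k]
    exact (convex_closedBall c (dist (x k) c)).finsum_mem h₀ h₁
      fun ι _ => dist_projSeq_le hproj ι (x k)
  rw [tendsto_iff_dist_tendsto_zero] at hsub ⊢
  exact (tendsto_iff_tendsto_subseq_of_antitone hanti hφ.tendsto_atTop).2 hsub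
end
end

section
/- Let c ∈ ⋂ i, C i, let y ∈ ℝⁿ, and let ι = (ι₁, …, ι_m) be an index vector. Set y₀ = y, and for 1 ≤ j ≤ m set y_j = P[(ι₁, …, ι_j)](y) and d_j = ‖y_j − y_{j−1}‖. Then for every j with 1 ≤ j ≤ m: (a) ‖y_j − c‖² ≤ ‖y_{j−1} − c‖² − d_j²; (b) ‖y_j − c‖² ≤ ‖y − c‖² − (d₁² + ⋯ + d_j²); (c) ‖y_j − y‖ ≤ d₁ + ⋯ + d_j; (d) ‖y_j − c‖² ≤ ‖y − c‖² − ‖y_j − y‖²/j; (e) ‖P[ι](y) − c‖² ≤ ‖y_j − c‖² ≤ ‖y − c‖² − d(y, C ι_j)²/j. -/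
/-!
The projection `Px` of `x` onto a convex set `K ∋ c` is characterised by
`⟪x - Px, c - Px⟫ ≤ 0`: the angle at `Px` is obtuse, so `‖Px - c‖² ≤ ‖x - c‖² - ‖Px - x‖²`
(`sq_norm_proj_sub_le`). Applied to one step this is the first conjunct; telescoping gives the
second, and the triangle inequality the third. By Cauchy–Schwarz
`‖Y j - y‖² ≤ (∑ D i)² ≤ j ∑ (D i)²`, which with the second conjunct gives the fourth. In the last
conjunct, `‖Y j - c‖` decreases in `j` by the one-step inequality, and since `Y j ∈ C ι_j` the
distance from `y` to `C ι_j` is at most `‖Y j - y‖`, so the fourth conjunct applies.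
-/

open Metric Filter Topology

noncomputable section

lemma sq_norm_proj_sub_le {E : Type*} [NormedAddCommGroup E] [InnerProductSpace ℝ E]
    {K : Set E} (hK : Convex ℝ K) {x p c : E} (hp : p ∈ K)
    (hmin : ∀ z ∈ K, ‖x - p‖ ≤ ‖x - z‖) (hc : c ∈ K) :
    ‖p - c‖ ^ 2 ≤ ‖x - c‖ ^ 2 - ‖p - x‖ ^ 2 := by
  have : Nonempty K := ⟨⟨p, hp⟩⟩
  have hinf : ‖x - p‖ = ⨅ w : K, ‖x - w‖ := by
    apply le_antisymm
    · exact le_ciInf fun w => hmin w w.2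
    · exact ciInf_le (f := fun w : K => ‖x - w‖)
        ⟨0, by rintro _ ⟨w, rfl⟩; exact norm_nonneg _⟩ ⟨p, hp⟩
  have hin := (norm_eq_iInf_iff_real_inner_le_zero hK hp).1 hinf c hc
  have h := norm_sub_sq_real (x - p) (c - p)
  rw [sub_sub_sub_cancel_right] at h
  rw [norm_sub_rev p c, norm_sub_rev p x]
  linarith

lemma projSeq_take_succ {α : Type*} (P : ℕ → α → α) (ι : List ℕ) (x : α) (k : ℕ)
    (hk : k < ι.length) :
    projSeq P (ι.take (k + 1)) x = P ι[k] (projSeq P (ι.take k) x) := by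
  rw [projSeq, List.take_succ_eq_append_getElem hk, List.foldl_append]
  rfl

theorem stmt7
    (n : ℕ) (hn : 0 < n) (C : ℕ → Set (EuclideanSpace ℝ (Fin n)))
    (hCne : ∀ i, (C i).Nonempty) (hCcl : ∀ i, IsClosed (C i))
    (hCcv : ∀ i, Convex ℝ (C i)) (hCint : (⋂ i, C i).Nonempty)
    (P : ℕ → EuclideanSpace ℝ (Fin n) → EuclideanSpace ℝ (Fin n))
    (hP : ∀ i x, P i x ∈ C i ∧ ∀ y ∈ C i, ‖x - P i x‖ ≤ ‖x - y‖)
    (c : EuclideanSpace ℝ (Fin n)) (hc : c ∈ ⋂ i, C i)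
    (y : EuclideanSpace ℝ (Fin n))
    (ι : List ℕ) (hι : ι ≠ [])
    (Y : ℕ → EuclideanSpace ℝ (Fin n)) (hY : ∀ j, Y j = projSeq P (ι.take j) y)
    (D : ℕ → ℝ) (hD : ∀ j, D j = ‖Y j - Y (j - 1)‖) :
    ∀ j, ∀ h1 : 1 ≤ j, ∀ hj : j ≤ ι.length,
      (‖Y j - c‖ ^ 2 ≤ ‖Y (j - 1) - c‖ ^ 2 - D j ^ 2) ∧
      (‖Y j - c‖ ^ 2 ≤ ‖y - c‖ ^ 2 - ∑ i ∈ Finset.Icc 1 j, D i ^ 2) ∧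
      (‖Y j - y‖ ≤ ∑ i ∈ Finset.Icc 1 j, D i) ∧
      (‖Y j - c‖ ^ 2 ≤ ‖y - c‖ ^ 2 - ‖Y j - y‖ ^ 2 / (j : ℝ)) ∧
      (‖projSeq P ι y - c‖ ^ 2 ≤ ‖Y j - c‖ ^ 2 ∧
        ‖Y j - c‖ ^ 2 ≤
          ‖y - c‖ ^ 2 - infDist y (C (ι[j - 1]'(by omega))) ^ 2 / (j : ℝ)) := by
  have hY0 : Y 0 = y := by simp [hY, projSeq]
  have hstep : ∀ k (hk : k < ι.length), Y (k + 1) = P ι[k] (Y k) := fun k hk => by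
    rw [hY, hY, projSeq_take_succ P ι y k hk]
  have hDs : ∀ k, D (k + 1) = ‖Y (k + 1) - Y k‖ := fun k => hD (k + 1)
  have ha : ∀ k, k < ι.length → ‖Y (k + 1) - c‖ ^ 2 ≤ ‖Y k - c‖ ^ 2 - D (k + 1) ^ 2 := by
    intro k hk
    rw [hDs, hstep k hk]
    exact sq_norm_proj_sub_le (hCcv _) (hP _ _).1 (hP _ _).2 (Set.mem_iInter.1 hc _)
  have hb : ∀ k, k ≤ ι.length →
      ‖Y k - c‖ ^ 2 ≤ ‖y - c‖ ^ 2 - ∑ i ∈ Finset.Icc 1 k, D i ^ 2 := by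
    intro k
    induction k with
    | zero => simp [hY0]
    | succ k ih =>
      intro hk
      rw [Finset.sum_Icc_succ_top (by omega)]
      linarith [ih (by omega), ha k (by omega)]
  have hc' : ∀ k, ‖Y k - y‖ ≤ ∑ i ∈ Finset.Icc 1 k, D i := by
    intro k
    induction k with
    | zero => simp [hY0]
    | succ k ih =>
      rw [Finset.sum_Icc_succ_top (by omega), hDs]
      linarith [norm_sub_le_norm_sub_add_norm_sub (Y (k + 1)) (Y k) y]
  have hmono : ∀ j k, j ≤ k → k ≤ ι.length → ‖Y k - c‖ ^ 2 ≤ ‖Y j - c‖ ^ 2 := by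
    intro j k hjk
    induction k, hjk using Nat.le_induction with
    | base => exact fun _ => le_rfl
    | succ k _ ih =>
      intro hk
      linarith [ih (by omega), ha k (by omega), sq_nonneg (D (k + 1))]
  intro j h1 hj
  obtain ⟨k, rfl⟩ : ∃ k, j = k + 1 := ⟨j - 1, by omega⟩
  have hpos : (0 : ℝ) < ((k + 1 : ℕ) : ℝ) := by positivity
  have hd : ‖Y (k + 1) - c‖ ^ 2 ≤ ‖y - c‖ ^ 2 - ‖Y (k + 1) - y‖ ^ 2 / ((k + 1 : ℕ) : ℝ) := by
    have hcs := sq_sum_le_card_mul_sum_sq (s := Finset.Icc 1 (k + 1)) (f := D)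
    rw [Nat.card_Icc, Nat.add_sub_cancel] at hcs
    have hsq : ‖Y (k + 1) - y‖ ^ 2 ≤ (∑ i ∈ Finset.Icc 1 (k + 1), D i) ^ 2 :=
      pow_le_pow_left₀ (norm_nonneg _) (hc' _) 2
    have hq : ‖Y (k + 1) - y‖ ^ 2 / ((k + 1 : ℕ) : ℝ) ≤ ∑ i ∈ Finset.Icc 1 (k + 1), D i ^ 2 := by
      rw [div_le_iff₀' hpos]
      exact hsq.trans hcs
    linarith [hb (k + 1) hj]
  refine ⟨ha k (by omega), hb _ hj, hc' _, hd, ?_, ?_⟩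
  · have h := hmono (k + 1) ι.length hj le_rfl
    rwa [hY ι.length, List.take_length] at h
  · have hmem : Y (k + 1) ∈ C ι[k] := by
      rw [hstep k (by omega)]
      exact (hP _ _).1
    have hdist : infDist y (C ι[k]) ≤ ‖Y (k + 1) - y‖ := by
      rw [← dist_eq_norm, dist_comm]
      exact infDist_le_dist_of_mem hmem
    have hsq : infDist y (C ι[k]) ^ 2 / ((k + 1 : ℕ) : ℝ) ≤
        ‖Y (k + 1) - y‖ ^ 2 / ((k + 1 : ℕ) : ℝ) :=
      div_le_div_of_nonneg_right (pow_le_pow_left₀ infDist_nonneg hdist 2) hpos.le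
    simp only [Nat.add_sub_cancel]
    linarith
end
end

section
/- Let c ∈ ⋂ i, C i and let k be any iteration number. Then ‖x^{k+1} − c‖² ≤ ‖x^k − c‖² − ‖x^{k+1} − x^k‖² / maxLength(w^k). -/
/-!
A metric projection satisfies `‖y - P y‖² + ‖P y - c‖² ≤ ‖y - c‖²` for every `c` in the set.
Summing along a string of `m` projections, and bounding the squared norm of a sum of `m` vectors by
`m` times the sum of their squared norms, gives
`‖P[ι] y - y‖² ≤ m (‖y - c‖² - ‖P[ι] y - c‖²)` (`projSeq_ineq`).
Hence every `P[ι] x` of positive weight lies in the sublevel set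
`‖z - c‖² + ‖z - x‖² / M ≤ ‖x - c‖²`, where `M` is the maximal length. The left side is convex in
`z`, so by Jensen's inequality (`norm_sq_sum_le`) the weighted average lies in the same set.
-/

open Metric Filter Topology

noncomputable section

/-- `maxLen w` is the maximum length of an index vector used (given positive weight)
by the weight function `w`. -/
def maxLen (w : List ℕ → ℝ) : ℕ :=
  sSup (List.length '' Function.support w)

/-- The variational inequality `⟪y - p, c - p⟫ ≤ 0` for the projection `p` of `y`, in squared-norm
form. -/
lemma proj_ineq {E : Type*} [NormedAddCommGroup E] [InnerProductSpace ℝ E] {K : Set E}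
    (hK : Convex ℝ K) {y p c : E} (hp : p ∈ K) (hmin : ∀ z ∈ K, ‖y - p‖ ≤ ‖y - z‖) (hc : c ∈ K) :
    ‖y - p‖ ^ 2 + ‖p - c‖ ^ 2 ≤ ‖y - c‖ ^ 2 := by
  have hinf : ‖y - p‖ = ⨅ z : K, ‖y - z‖ := by
    have : Nonempty K := ⟨⟨p, hp⟩⟩
    apply le_antisymm
    · exact le_ciInf fun z => hmin z z.2
    · exact ciInf_le (f := fun z : K => ‖y - z‖)
        ⟨0, by rintro _ ⟨z, rfl⟩; exact norm_nonneg _⟩ ⟨p, hp⟩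
  have h := (norm_eq_iInf_iff_real_inner_le_zero hK hp).1 hinf c hc
  have e : y - c = (y - p) - (c - p) := by abel
  rw [e, norm_sub_sq_real (y - p), norm_sub_rev p c]
  linarith

/-- Induction on the string; prepending a projection to a string of length `m > 0` costs
`m ‖a + b‖² ≤ (m + 1) (m ‖a‖² + ‖b‖²)`. -/
lemma projSeq_ineq {E : Type*} [NormedAddCommGroup E] [InnerProductSpace ℝ E] {P : ℕ → E → E}
    {c : E} (hP : ∀ i y, ‖y - P i y‖ ^ 2 + ‖P i y - c‖ ^ 2 ≤ ‖y - c‖ ^ 2) (ι : List ℕ) (y : E) :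
    ‖projSeq P ι y - y‖ ^ 2 ≤ ι.length * (‖y - c‖ ^ 2 - ‖projSeq P ι y - c‖ ^ 2) := by
  induction ι generalizing y with
  | nil => simp [projSeq]
  | cons i t ih =>
    have hcons : projSeq P (i :: t) y = projSeq P t (P i y) := rfl
    have h1 := hP i y
    have h2 := ih (P i y)
    rw [hcons]
    set p := P i y
    set z := projSeq P t p with hz
    rcases t.eq_nil_or_concat with ht | ⟨_, _, ht⟩
    · have hzp : z = p := by rw [hz, ht]; rfl
      rw [hzp, ht, norm_sub_rev p y]
      simp only [List.length_singleton, Nat.cast_one]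
      linarith
    · have hm : (0 : ℝ) < t.length := by
        rw [ht]; simp; positivity
      have hlen : (((i :: t).length : ℕ) : ℝ) = t.length + 1 := by simp
      rw [hlen]
      generalize (t.length : ℝ) = m at *
      have e : z - y = (z - p) - (y - p) := by abel
      have hs : 0 ≤ ‖(z - p) + m • (y - p)‖ ^ 2 := sq_nonneg _
      rw [norm_add_sq_real (z - p), norm_smul, real_inner_smul_right, mul_pow, Real.norm_eq_abs,
        sq_abs] at hs
      rw [e, norm_sub_sq_real (z - p)]
      refine le_of_mul_le_mul_left ?_ hm
      have h3 := mul_le_mul_of_nonneg_left h1 (by positivity : 0 ≤ m * (m + 1))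
      have h4 := mul_le_mul_of_nonneg_left h2 (by positivity : 0 ≤ m + 1)
      linarith

/-- Jensen's inequality for the squared distance to a point. -/
lemma norm_sq_sum_le {E α : Type*} [NormedAddCommGroup E] [InnerProductSpace ℝ E] (s : Finset α)
    (w : α → ℝ) (f : α → E) (a : E) (h0 : ∀ i ∈ s, 0 ≤ w i) (h1 : ∑ i ∈ s, w i = 1) :
    ‖∑ i ∈ s, w i • f i - a‖ ^ 2 ≤ ∑ i ∈ s, w i * ‖f i - a‖ ^ 2 := by
  have e : ∑ i ∈ s, w i • f i - a = ∑ i ∈ s, w i • (f i - a) := by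
    simp only [smul_sub, Finset.sum_sub_distrib, ← Finset.sum_smul, h1, one_smul]
  have hconv : ConvexOn ℝ Set.univ fun v : E => ‖v‖ ^ 2 :=
    convexOn_univ_norm.pow (fun _ _ => norm_nonneg _) 2
  rw [e]
  simpa using hconv.map_sum_le h0 h1 (p := fun i => f i - a) (fun _ _ => Set.mem_univ _)

theorem stmt9
    (n : ℕ) (hn : 0 < n) (C : ℕ → Set (EuclideanSpace ℝ (Fin n)))
    (hCne : ∀ i, (C i).Nonempty) (hCcl : ∀ i, IsClosed (C i))
    (hCcv : ∀ i, Convex ℝ (C i)) (hCint : (⋂ i, C i).Nonempty)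
    (P : ℕ → EuclideanSpace ℝ (Fin n) → EuclideanSpace ℝ (Fin n))
    (hP : ∀ i x, P i x ∈ C i ∧ ∀ y ∈ C i, ‖x - P i x‖ ≤ ‖x - y‖)
    (w : ℕ → List ℕ → ℝ) (hw : ∀ k, IsWeightFn (w k))
    (x : ℕ → EuclideanSpace ℝ (Fin n))
    (hx : ∀ k, x (k + 1) = ∑ᶠ ι, w k ι • projSeq P ι (x k))
    (c : EuclideanSpace ℝ (Fin n)) (hc : c ∈ ⋂ i, C i) (k : ℕ) :
    ‖x (k + 1) - c‖ ^ 2 ≤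
      ‖x k - c‖ ^ 2 - ‖x (k + 1) - x k‖ ^ 2 / (maxLen (w k) : ℝ) := by
  obtain ⟨hw0, -, hfin, hne, hsum⟩ := hw k
  have hx' := hx k
  have hproj : ∀ i y, ‖y - P i y‖ ^ 2 + ‖P i y - c‖ ^ 2 ≤ ‖y - c‖ ^ 2 := fun i y =>
    proj_ineq (hCcv i) (hP i y).1 (hP i y).2 (Set.mem_iInter.1 hc i)
  rw [finsum_eq_sum_of_support_subset (s := hfin.toFinset) _ (by simp)] at hsum
  rw [finsum_eq_sum_of_support_subset (s := hfin.toFinset) _ (by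
    intro ι hι
    simp only [Set.Finite.coe_toFinset, Function.mem_support] at hι ⊢
    exact fun h => hι (by rw [h, zero_smul]))] at hx'
  have key : ∀ ι ∈ hfin.toFinset, ‖projSeq P ι (x k) - c‖ ^ 2
      + ‖projSeq P ι (x k) - x k‖ ^ 2 / (maxLen (w k) : ℝ) ≤ ‖x k - c‖ ^ 2 := by
    intro ι hι
    have hι' : ι ∈ Function.support (w k) := by simpa using hι
    have hle : ι.length ≤ maxLen (w k) :=
      le_csSup (hfin.image _).bddAbove (Set.mem_image_of_mem _ hι')
    have hpos : 0 < ι.length := List.length_pos_iff.2 (hne ι hι')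
    have hposR : (0 : ℝ) < ι.length := by exact_mod_cast hpos
    have hleR : (ι.length : ℝ) ≤ maxLen (w k) := by exact_mod_cast hle
    have h := projSeq_ineq hproj ι (x k)
    have h2 : ‖projSeq P ι (x k) - x k‖ ^ 2 / (maxLen (w k) : ℝ)
        ≤ ‖projSeq P ι (x k) - x k‖ ^ 2 / (ι.length : ℝ) := by gcongr
    have h3 : ‖projSeq P ι (x k) - x k‖ ^ 2 / (ι.length : ℝ)
        ≤ ‖x k - c‖ ^ 2 - ‖projSeq P ι (x k) - c‖ ^ 2 := by
      rw [div_le_iff₀ hposR]; linarith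
    linarith
  have hA := norm_sq_sum_le hfin.toFinset (w k) (fun ι => projSeq P ι (x k)) c
    (fun ι _ => hw0 ι) hsum
  have hB := norm_sq_sum_le hfin.toFinset (w k) (fun ι => projSeq P ι (x k)) (x k)
    (fun ι _ => hw0 ι) hsum
  rw [← hx'] at hA hB
  have hB' := div_le_div_of_nonneg_right hB (Nat.cast_nonneg (α := ℝ) (maxLen (w k)))
  have hS := Finset.sum_le_sum fun ι hι => mul_le_mul_of_nonneg_left (key ι hι) (hw0 ι)
  rw [← Finset.sum_mul, hsum, one_mul] at hS
  simp only [mul_add, Finset.sum_add_distrib, ← mul_div_assoc, ← Finset.sum_div] at hS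
  linarith
end
end

section
/- Third Convergence Theorem: Suppose UASC holds. Then the sequence (x^k) converges to some limit L ∈ ℝⁿ, and L ∈ C j for every index j for which the series ∑_{k=0}^∞ ∑_{ι ∈ I⟨j⟩} w^k(ι) diverges (i.e. the nonnegative sequence k ↦ ∑_{ι ∈ I⟨j⟩} w^k(ι) is not summable). In particular, if this series diverges for every index j with C j ≠ ℝⁿ, then (x^k) converges to a point of ⋂ i, C i. -/
/-!
Fix `c ∈ ⋂ i, C i` and a cluster point `p` of the bounded sequence `x`. By UASC there is `d > 0`
such that every `C i` missing `p` stays at distance at least `d` from `p` (`exists_gap`). Call an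
index vector *bad* if it contains an index `i` with `p ∉ C i`. As long as `‖x k - p‖ ≤ d / 2`,
a bad vector has a projection step of length at least `d / 2`, so it lowers `‖· - c‖ ^ 2` by at
least `d ^ 2 / 4` (`projSeq_bad`), whereas a vector that is not bad does not increase `‖· - p‖`.
Averaging with the weights (`weighted_step`), if `b` is the total weight of bad vectors at
step `k`, then `‖x k - c‖ ^ 2` drops by at least `b * d ^ 2 / 4` while `‖x k - p‖` grows by at
most `b * M`, with `M` a bound for the distances from `p`. Hence
`‖x k - p‖ + (4 * M / d ^ 2) * ‖x k - c‖ ^ 2` is nonincreasing while `‖x k - p‖ ≤ d / 2`. Since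
`‖x k - c‖ ^ 2` converges and `x k` comes arbitrarily close to `p`, the sequence gets trapped in
every neighbourhood of `p`, that is, `x k → p`.

If `p ∉ C j`, every vector containing `j` is bad, and the drops of `‖x k - c‖ ^ 2` bound the sum
of the weights of these vectors, so that the series for `j` converges.
-/

open Metric Filter Topology

noncomputable section

section Auxiliary

variable {E : Type*} [NormedAddCommGroup E] [InnerProductSpace ℝ E]

lemma proj_sq_le {K : Set E} (hK : Convex ℝ K) {x v c : E} (hv : v ∈ K)
    (hmin : ∀ y ∈ K, ‖x - v‖ ≤ ‖x - y‖) (hc : c ∈ K) :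
    ‖v - c‖ ^ 2 + ‖x - v‖ ^ 2 ≤ ‖x - c‖ ^ 2 := by
  have hinf : ‖x - v‖ = ⨅ y : K, ‖x - y‖ := by
    have : Nonempty K := ⟨⟨v, hv⟩⟩
    apply le_antisymm
    · exact le_ciInf fun y => hmin y y.2
    · exact ciInf_le ⟨0, by rintro _ ⟨y, rfl⟩; exact norm_nonneg _⟩ (⟨v, hv⟩ : K)
  have h := (norm_eq_iInf_iff_real_inner_le_zero hK hv).1 hinf c hc
  have e : x - c = (x - v) - (c - v) := by abel
  rw [e, norm_sub_rev v c, norm_sub_sq_real (x - v)]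
  linarith

variable {C : ℕ → Set E} {P : ℕ → E → E}

lemma proj_le (hCcv : ∀ i, Convex ℝ (C i))
    (hP : ∀ i x, P i x ∈ C i ∧ ∀ y ∈ C i, ‖x - P i x‖ ≤ ‖x - y‖)
    {i : ℕ} {c : E} (hc : c ∈ C i) (x : E) : ‖P i x - c‖ ≤ ‖x - c‖ := by
  have h := proj_sq_le (hCcv i) (hP i x).1 (hP i x).2 hc
  exact (sq_le_sq₀ (norm_nonneg _) (norm_nonneg _)).1 (by nlinarith [sq_nonneg ‖x - P i x‖])

lemma projSeq_le (hCcv : ∀ i, Convex ℝ (C i))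
    (hP : ∀ i x, P i x ∈ C i ∧ ∀ y ∈ C i, ‖x - P i x‖ ≤ ‖x - y‖)
    {c : E} (l : List ℕ) (hc : ∀ i ∈ l, c ∈ C i) (x : E) :
    ‖projSeq P l x - c‖ ≤ ‖x - c‖ := by
  induction l generalizing x with
  | nil => simp [projSeq]
  | cons i l ih =>
    have h1 := ih (fun j hj => hc j (List.mem_cons_of_mem _ hj)) (P i x)
    exact h1.trans (proj_le hCcv hP (hc i List.mem_cons_self) x)

/-- Up to its first index `i` with `p ∉ C i`, the path of projections stays within `d / 2` of `p`;
the projection onto that `C i` then has length at least `d / 2`. -/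
lemma projSeq_bad (hCcv : ∀ i, Convex ℝ (C i))
    (hP : ∀ i x, P i x ∈ C i ∧ ∀ y ∈ C i, ‖x - P i x‖ ≤ ‖x - y‖)
    {c p : E} (hc : ∀ i, c ∈ C i) {d : ℝ} (hd : 0 < d)
    (hgap : ∀ i, p ∉ C i → ∀ y ∈ C i, d ≤ ‖p - y‖)
    (l : List ℕ) (hl : ∃ i ∈ l, p ∉ C i) (x : E) (hx : ‖x - p‖ ≤ d / 2) :
    ‖projSeq P l x - c‖ ^ 2 ≤ ‖x - c‖ ^ 2 - d ^ 2 / 4 := by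
  induction l generalizing x with
  | nil => simp at hl
  | cons i l ih =>
    have e : projSeq P (i :: l) x = projSeq P l (P i x) := rfl
    rw [e]
    have h := proj_sq_le (hCcv i) (hP i x).1 (hP i x).2 (hc i)
    by_cases hi : p ∈ C i
    · have hl' : ∃ j ∈ l, p ∉ C j := by
        obtain ⟨j, hj, hpj⟩ := hl
        rcases List.mem_cons.1 hj with rfl | hj
        · exact absurd hi hpj
        · exact ⟨j, hj, hpj⟩
      have := ih hl' (P i x) ((proj_le hCcv hP hi x).trans hx)
      nlinarith [sq_nonneg ‖x - P i x‖]
    · have h1 := hgap i hi _ (hP i x).1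
      have h2 : ‖p - P i x‖ ≤ ‖p - x‖ + ‖x - P i x‖ := norm_sub_le_norm_sub_add_norm_sub _ _ _
      rw [norm_sub_rev p x] at h2
      have h3 : d / 2 ≤ ‖x - P i x‖ := by linarith
      have h4 := projSeq_le hCcv hP l (fun j _ => hc j) (P i x)
      have h5 : ‖projSeq P l (P i x) - c‖ ^ 2 ≤ ‖P i x - c‖ ^ 2 := by gcongr
      have h6 : (d / 2) ^ 2 ≤ ‖x - P i x‖ ^ 2 := by gcongr
      nlinarith

/-- Jensen's inequality for the averaging step, when the values of the convex function `φ` are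
at most `a + e` on the vectors in `B` and at most `a` on the other ones. -/
lemma weighted_step {w : List ℕ → ℝ} (hw : IsWeightFn w) (B : Set (List ℕ)) (f : List ℕ → E)
    {φ : E → ℝ} (hφ : ConvexOn ℝ Set.univ φ) {a e : ℝ}
    (h1 : ∀ l, l ∉ B → φ (f l) ≤ a) (h2 : ∀ l ∈ B, φ (f l) ≤ a + e) :
    φ (∑ᶠ l, w l • f l) ≤ a + (∑ᶠ l ∈ B, w l) * e := by
  classical
  obtain ⟨h0, -, hfin, -, hsum⟩ := hw
  set S := hfin.toFinset with hS
  have hmem : ∀ l, w l ≠ 0 → l ∈ S := fun l hl => by simpa [hS] using hl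
  have e1 : ∑ᶠ l, w l • f l = ∑ l ∈ S, w l • f l :=
    finsum_eq_sum_of_support_subset _ fun l hl => hmem l fun h => hl (by simp [h])
  have e2 : ∑ l ∈ S, w l = 1 := by
    rw [← hsum, finsum_eq_sum_of_support_subset w fun l hl => hmem l hl]
  have e3 : ∑ᶠ l ∈ B, w l = ∑ l ∈ S, if l ∈ B then w l else 0 := by
    rw [← finsum_eq_sum_of_support_subset]
    · exact finsum_congr fun l => finsum_eq_if
    · intro l hl
      refine hmem l fun h => hl ?_
      simp [h]
  rw [e1, e3]
  calc φ (∑ l ∈ S, w l • f l) ≤ ∑ l ∈ S, w l • φ (f l) :=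
        hφ.map_sum_le (fun l _ => h0 l) e2 (fun _ _ => Set.mem_univ _)
    _ ≤ ∑ l ∈ S, (w l * a + (if l ∈ B then w l else 0) * e) := by
        refine Finset.sum_le_sum fun l _ => ?_
        by_cases hl : l ∈ B
        · have := mul_le_mul_of_nonneg_left (h2 l hl) (h0 l)
          simp only [hl, if_true, smul_eq_mul]
          linarith
        · have := mul_le_mul_of_nonneg_left (h1 l hl) (h0 l)
          simp only [hl, if_false, smul_eq_mul]
          linarith
    _ = a + (∑ l ∈ S, if l ∈ B then w l else 0) * e := by
        rw [Finset.sum_add_distrib, ← Finset.sum_mul, ← Finset.sum_mul, e2, one_mul]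

lemma convexOn_norm_sub (q : E) : ConvexOn ℝ Set.univ fun y : E => ‖y - q‖ := by
  simpa [dist_eq_norm] using convexOn_univ_dist (E := E) q

lemma convexOn_norm_sub_sq (q : E) : ConvexOn ℝ Set.univ fun y : E => ‖y - q‖ ^ 2 :=
  (convexOn_norm_sub q).pow (fun _ _ => norm_nonneg _) 2

lemma exists_gap (hUASC : ∀ p : E, p ∉ ⋂ i, C i →
      0 < infDist p (⋃ (i : ℕ) (_ : p ∉ C i), C i)) (p : E) :
    ∃ d : ℝ, 0 < d ∧ ∀ i, p ∉ C i → ∀ y ∈ C i, d ≤ ‖p - y‖ := by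
  by_cases hp : p ∈ ⋂ i, C i
  · exact ⟨1, one_pos, fun i hi => absurd (Set.mem_iInter.1 hp i) hi⟩
  · refine ⟨_, hUASC p hp, fun i hi y hy => ?_⟩
    rw [← dist_eq_norm]
    exact infDist_le_dist_of_mem (Set.mem_iUnion₂.2 ⟨i, hi, hy⟩)

end Auxiliary

theorem stmt15
    (n : ℕ) (hn : 0 < n) (C : ℕ → Set (EuclideanSpace ℝ (Fin n)))
    (hCne : ∀ i, (C i).Nonempty) (hCcl : ∀ i, IsClosed (C i))
    (hCcv : ∀ i, Convex ℝ (C i)) (hCint : (⋂ i, C i).Nonempty)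
    (P : ℕ → EuclideanSpace ℝ (Fin n) → EuclideanSpace ℝ (Fin n))
    (hP : ∀ i x, P i x ∈ C i ∧ ∀ y ∈ C i, ‖x - P i x‖ ≤ ‖x - y‖)
    (w : ℕ → List ℕ → ℝ) (hw : ∀ k, IsWeightFn (w k))
    (x : ℕ → EuclideanSpace ℝ (Fin n))
    (hx : ∀ k, x (k + 1) = ∑ᶠ ι, w k ι • projSeq P ι (x k))
    (hUASC : ∀ p : EuclideanSpace ℝ (Fin n), p ∉ ⋂ i, C i →
      0 < infDist p (⋃ (i : ℕ) (_ : p ∉ C i), C i)) :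
    ∃ L : EuclideanSpace ℝ (Fin n),
      Tendsto x atTop (𝓝 L) ∧
      (∀ j : ℕ, ¬ Summable (fun k => ∑ᶠ ι ∈ {l : List ℕ | j ∈ l}, w k ι) → L ∈ C j) ∧
      ((∀ j : ℕ, C j ≠ Set.univ →
          ¬ Summable (fun k => ∑ᶠ ι ∈ {l : List ℕ | j ∈ l}, w k ι)) →
        L ∈ ⋂ i, C i) := by
  obtain ⟨c, hc⟩ := hCint
  rw [Set.mem_iInter] at hc
  have hb0 : ∀ k (B : Set (List ℕ)), 0 ≤ ∑ᶠ l ∈ B, w k l := fun k B =>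
    finsum_nonneg fun l => finsum_nonneg fun _ => (hw k).1 l
  have hdec : ∀ k, ‖x (k + 1) - c‖ ≤ ‖x k - c‖ := by
    intro k
    rw [hx k]
    have h := weighted_step (hw k) ∅ (fun l => projSeq P l (x k)) (convexOn_norm_sub c)
      (a := ‖x k - c‖) (e := 0)
      (fun l _ => projSeq_le hCcv hP l (fun i _ => hc i) (x k)) (by simp)
    simpa using h
  have hanti : Antitone fun k => ‖x k - c‖ := antitone_nat_of_succ_le hdec
  have hantiA : Antitone fun k => ‖x k - c‖ ^ 2 := fun i j hij => by
    have := hanti hij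
    dsimp only at this ⊢
    gcongr
  obtain ⟨α, hα⟩ : ∃ α, Tendsto (fun k => ‖x k - c‖ ^ 2) atTop (𝓝 α) :=
    ⟨_, tendsto_atTop_ciInf hantiA ⟨0, by rintro _ ⟨k, rfl⟩; positivity⟩⟩
  have hαle : ∀ k, α ≤ ‖x k - c‖ ^ 2 := fun k => hantiA.le_of_tendsto hα k
  obtain ⟨p, -, ψ, hψ, hp⟩ := tendsto_subseq_of_bounded
    (isBounded_closedBall (x := c) (r := ‖x 0 - c‖)) (x := x) fun k => by
      rw [mem_closedBall, dist_eq_norm]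
      exact hanti (Nat.zero_le k)
  obtain ⟨d, hd, hgap⟩ := exists_gap hUASC p
  have hdrop : ∀ B : Set (List ℕ), (∀ l ∈ B, ∃ i ∈ l, p ∉ C i) → ∀ k, ‖x k - p‖ ≤ d / 2 →
      ‖x (k + 1) - c‖ ^ 2 ≤ ‖x k - c‖ ^ 2 + (∑ᶠ l ∈ B, w k l) * (-(d ^ 2 / 4)) := by
    intro B hB k hk
    rw [hx k]
    refine weighted_step (hw k) B (fun l => projSeq P l (x k)) (convexOn_norm_sub_sq c) ?_ ?_
    · intro l _
      have := projSeq_le hCcv hP l (fun i _ => hc i) (x k)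
      gcongr
    · intro l hl
      have := projSeq_bad hCcv hP hc hd hgap l (hB l hl) (x k) hk
      linarith
  set M := ‖x 0 - c‖ + ‖c - p‖ with hM
  have hM0 : 0 ≤ M := by positivity
  set K := 4 * M / d ^ 2 with hK
  have hK0 : 0 ≤ K := by positivity
  have hKd : K * (d ^ 2 / 4) = M := by
    rw [hK]
    field_simp
  have hpot : ∀ k, ‖x k - p‖ ≤ d / 2 →
      ‖x (k + 1) - p‖ + K * ‖x (k + 1) - c‖ ^ 2 ≤ ‖x k - p‖ + K * ‖x k - c‖ ^ 2 := by
    intro k hk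
    set B : Set (List ℕ) := {l | ∃ i ∈ l, p ∉ C i} with hB
    have h1 := mul_le_mul_of_nonneg_left (hdrop B (fun l hl => hl) k hk) hK0
    have h2 : ‖x (k + 1) - p‖ ≤ ‖x k - p‖ + (∑ᶠ l ∈ B, w k l) * M := by
      rw [hx k]
      refine weighted_step (hw k) B (fun l => projSeq P l (x k)) (convexOn_norm_sub p) ?_ ?_
      · intro l hl
        refine projSeq_le hCcv hP l (fun i hi => ?_) (x k)
        by_contra hpi
        exact hl ⟨i, hi, hpi⟩
      · intro l _
        have h3 := projSeq_le hCcv hP l (fun i _ => hc i) (x k)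
        have h4 : ‖x k - c‖ ≤ ‖x 0 - c‖ := hanti (Nat.zero_le k)
        have h5 : ‖projSeq P l (x k) - p‖ ≤ ‖projSeq P l (x k) - c‖ + ‖c - p‖ :=
          norm_sub_le_norm_sub_add_norm_sub _ _ _
        have h6 := norm_nonneg (x k - p)
        linarith
    have h3 : K * (‖x k - c‖ ^ 2 + (∑ᶠ l ∈ B, w k l) * (-(d ^ 2 / 4)))
        = K * ‖x k - c‖ ^ 2 - (∑ᶠ l ∈ B, w k l) * M := by
      rw [← hKd]
      ring
    linarith
  have hlim : Tendsto x atTop (𝓝 p) := by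
    rw [Metric.tendsto_atTop]
    intro ε hε
    -- Along the subsequence, the potential approaches its lower bound `K * α`.
    have hV : Tendsto (fun m => ‖x (ψ m) - p‖ + K * (‖x (ψ m) - c‖ ^ 2 - α)) atTop (𝓝 0) := by
      have t1 : Tendsto (fun m => ‖x (ψ m) - p‖) atTop (𝓝 0) :=
        tendsto_iff_norm_sub_tendsto_zero.1 hp
      have t2 := ((hα.comp hψ.tendsto_atTop).sub_const α).const_mul K
      simpa using t1.add t2
    have hpos : 0 < min ε (d / 2) := lt_min hε (by positivity)
    obtain ⟨m, hm⟩ := (hV.eventually_lt_const hpos).exists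
    refine ⟨ψ m, fun k hk => ?_⟩
    have key : ‖x k - p‖ + K * (‖x k - c‖ ^ 2 - α) < min ε (d / 2) := by
      induction k, hk using Nat.le_induction with
      | base => exact hm
      | succ k _ ih =>
        have h1 := mul_nonneg hK0 (sub_nonneg.2 (hαle k))
        have h2 := hpot k (by linarith [min_le_right ε (d / 2)])
        linarith
    have h1 := mul_nonneg hK0 (sub_nonneg.2 (hαle k))
    rw [dist_eq_norm]
    linarith [min_le_left ε (d / 2)]
  have hmain : ∀ j : ℕ, ¬ Summable (fun k => ∑ᶠ ι ∈ {l : List ℕ | j ∈ l}, w k ι) → p ∈ C j := by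
    intro j hj
    by_contra hpj
    apply hj
    obtain ⟨N, hN⟩ := Metric.tendsto_atTop.1 hlim (d / 2) (by positivity)
    rw [← summable_nat_add_iff N]
    refine summable_of_sum_range_le (c := 4 / d ^ 2 * ‖x N - c‖ ^ 2) (fun k => hb0 _ _) fun m => ?_
    have tele : (∑ k ∈ Finset.range m, ∑ᶠ ι ∈ {l : List ℕ | j ∈ l}, w (k + N) ι) * (d ^ 2 / 4)
        ≤ ‖x N - c‖ ^ 2 - ‖x (m + N) - c‖ ^ 2 := by
      induction m with
      | zero => simp
      | succ m ih =>
        have h1 := hN (m + N) (Nat.le_add_left _ _)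
        rw [dist_eq_norm] at h1
        have h2 := hdrop {l | j ∈ l} (fun l hl => ⟨j, hl, hpj⟩) (m + N) h1.le
        rw [Finset.sum_range_succ, add_mul, Nat.add_right_comm m 1 N]
        linarith
    have h3 := sq_nonneg ‖x (m + N) - c‖
    rw [div_mul_eq_mul_div, le_div_iff₀ (by positivity)]
    linarith
  refine ⟨p, hlim, hmain, fun hall => Set.mem_iInter.2 fun j => ?_⟩
  by_cases hj : C j = Set.univ
  · rw [hj]
    trivial
  · exact hmain j (hall j hj)
end
end

section
/- Fifth Convergence Theorem: Let ε > 0, let (v^k)_{k ∈ ℕ} be a sequence of vectors in ℝⁿ with ∑_{k=0}^∞ ‖v^k‖ < ∞, let x_ε^0 ∈ ℝⁿ be arbitrary, and let (x_ε^k)_{k ∈ ℕ} satisfy x_ε^{k+1} = (∑_ι w^k(ι) • P^ε[ι](x_ε^k)) + v^k for all k ≥ 0. Then the sequence (x_ε^k) converges; moreover, if p is its limit, then d(p, C j) ≤ ε for every index j for which the series ∑_{k=0}^∞ ∑_{ι ∈ I⟨j⟩} w^k(ι) diverges (i.e. the nonnegative sequence k ↦ ∑_{ι ∈ I⟨j⟩}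 w^k(ι) is not summable). -/
/-!
Let `z` be a point of the common intersection. A metric projection satisfies
`‖P x - z‖² ≤ ‖x - z‖² - ‖x - P x‖²`, and a thresholded projection moves its argument either not
at all or by `s ≥ ε`, so that `ε * s ≤ s²`. Adding up along an index vector and using the triangle
inequality, `ε * ‖P^ε[ι] x - x‖ ≤ ‖x - z‖² - ‖P^ε[ι] x - z‖²` (`projSeq_fejer`), and by convexity of
`‖·‖²` the same bound holds for weighted averages (`weighted_decrease`). Along the iteration the
right-hand sides telescope up to summable errors coming from `v` (`summable_decrease`), so the step
lengths are summable and the sequence is Cauchy.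

If the limit has distance more than `ε` from `C j`, then eventually every index vector containing
`j` moves the iterate at least once, which costs at least `ε²` in squared distance to `z`
(`projSeq_decrease`). Hence `ε² * ∑_{ι ∋ j} w k ι` is eventually bounded by the summable decrease.
-/

open Metric Filter Topology

noncomputable section

section FejerLemmas

variable {E : Type*} [NormedAddCommGroup E] [InnerProductSpace ℝ E]

lemma proj_fejer {K : Set E} (hK : Convex ℝ K) {x q z : E} (hq : q ∈ K)
    (hmin : ∀ y ∈ K, ‖x - q‖ ≤ ‖x - y‖) (hz : z ∈ K) :
    ‖x - q‖ ^ 2 ≤ ‖x - z‖ ^ 2 - ‖q - z‖ ^ 2 := by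
  have hinf : ‖x - q‖ = ⨅ y : K, ‖x - y‖ := by
    have : Nonempty K := ⟨⟨q, hq⟩⟩
    refine le_antisymm (le_ciInf fun y => hmin y y.2) ?_
    exact ciInf_le (f := fun y : K => ‖x - y‖)
      ⟨0, by rintro _ ⟨y, rfl⟩; exact norm_nonneg _⟩ ⟨q, hq⟩
  have hin := (norm_eq_iInf_iff_real_inner_le_zero hK hq).1 hinf z hz
  have h1 : ‖x - z‖ ^ 2 = ‖x - q‖ ^ 2 - 2 * inner ℝ (x - q) (z - q) + ‖z - q‖ ^ 2 := by
    rw [← norm_sub_sq_real]; congr 2; abel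
  rw [norm_sub_rev z q] at h1
  linarith

variable {C : ℕ → Set E} {P Pe : ℕ → E → E} {ε : ℝ} {z : E}

/-- The displacement along an index vector is controlled by the decrease of the squared distance
to `z`; the factor `ε` in place of a square is available because no nonzero move is shorter than
`ε`. -/
lemma projSeq_fejer (hε : 0 < ε) (hC : ∀ i, Convex ℝ (C i))
    (hP : ∀ i x, P i x ∈ C i ∧ ∀ y ∈ C i, ‖x - P i x‖ ≤ ‖x - y‖)
    (hPe : ∀ i x, (ε ≤ ‖x - P i x‖ → Pe i x = P i x) ∧ (‖x - P i x‖ < ε → Pe i x = x))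
    (hz : ∀ i, z ∈ C i) (ι : List ℕ) (x : E) :
    ε * ‖projSeq Pe ι x - x‖ ≤ ‖x - z‖ ^ 2 - ‖projSeq Pe ι x - z‖ ^ 2 := by
  induction ι generalizing x with
  | nil => simp [projSeq]
  | cons i l ih =>
    have hcons : projSeq Pe (i :: l) x = projSeq Pe l (Pe i x) := rfl
    rw [hcons]
    rcases lt_or_ge ‖x - P i x‖ ε with h | h
    · rw [(hPe i x).2 h]; exact ih x
    · rw [(hPe i x).1 h]
      have h1 := ih (P i x)
      have h2 := proj_fejer (hC i) (hP i x).1 (hP i x).2 (hz i)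
      have h3 : ‖projSeq Pe l (P i x) - x‖ ≤ ‖projSeq Pe l (P i x) - P i x‖ + ‖x - P i x‖ := by
        rw [norm_sub_rev x]; exact norm_sub_le_norm_sub_add_norm_sub _ _ _
      nlinarith [norm_nonneg (x - P i x)]

/-- An index vector containing `j` moves any point at distance at least `ε` from `C j` at least
once, and every move has length at least `ε`. -/
lemma projSeq_decrease (hε : 0 < ε) (hC : ∀ i, Convex ℝ (C i))
    (hP : ∀ i x, P i x ∈ C i ∧ ∀ y ∈ C i, ‖x - P i x‖ ≤ ‖x - y‖)
    (hPe : ∀ i x, (ε ≤ ‖x - P i x‖ → Pe i x = P i x) ∧ (‖x - P i x‖ < ε → Pe i x = x))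
    (hz : ∀ i, z ∈ C i) {j : ℕ} {x : E} (hx : ε ≤ ‖x - P j x‖) (ι : List ℕ) (hj : j ∈ ι) :
    ε ^ 2 ≤ ‖x - z‖ ^ 2 - ‖projSeq Pe ι x - z‖ ^ 2 := by
  induction ι with
  | nil => simp at hj
  | cons i l ih =>
    have hcons : projSeq Pe (i :: l) x = projSeq Pe l (Pe i x) := rfl
    rw [hcons]
    rcases lt_or_ge ‖x - P i x‖ ε with h | h
    · rw [(hPe i x).2 h]
      refine ih ((List.mem_cons.1 hj).resolve_left ?_)
      rintro rfl
      exact absurd h (not_lt.2 hx)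
    · rw [(hPe i x).1 h]
      have h1 := projSeq_fejer hε hC hP hPe hz l (P i x)
      have h2 := proj_fejer (hC i) (hP i x).1 (hP i x).2 (hz i)
      have h3 : 0 ≤ ε * ‖projSeq Pe l (P i x) - P i x‖ := by positivity
      nlinarith

/-- Pointwise lower bounds on the decrease of the squared distance to `z` average to a lower bound
for the weighted mean, by convexity of the squared norm. -/
lemma weighted_decrease {α : Type*} (S : Finset α) {w : α → ℝ} (hw : ∀ a ∈ S, 0 ≤ w a)
    (hw1 : ∑ a ∈ S, w a = 1) {q : α → E} {g : α → ℝ} {x : E}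
    (hg : ∀ a ∈ S, g a ≤ ‖x - z‖ ^ 2 - ‖q a - z‖ ^ 2) :
    ∑ a ∈ S, w a * g a ≤ ‖x - z‖ ^ 2 - ‖∑ a ∈ S, w a • q a - z‖ ^ 2 := by
  have h1 : ∑ a ∈ S, w a • q a - z = ∑ a ∈ S, w a • (q a - z) := by
    simp only [smul_sub, Finset.sum_sub_distrib, ← Finset.sum_smul, hw1, one_smul]
  have h2 : ‖∑ a ∈ S, w a • q a - z‖ ≤ ∑ a ∈ S, w a * ‖q a - z‖ := by
    rw [h1]
    refine (norm_sum_le _ _).trans (Finset.sum_le_sum fun a ha => ?_)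
    rw [norm_smul, Real.norm_of_nonneg (hw a ha)]
  have h3 : ‖∑ a ∈ S, w a • q a - z‖ ^ 2 ≤ ∑ a ∈ S, w a * ‖q a - z‖ ^ 2 :=
    (pow_le_pow_left₀ (norm_nonneg _) h2 2).trans
      (Real.pow_arith_mean_le_arith_mean_pow S w _ hw hw1 (fun _ _ => norm_nonneg _) 2)
  have h4 : ∑ a ∈ S, w a * g a ≤ ∑ a ∈ S, w a * (‖x - z‖ ^ 2 - ‖q a - z‖ ^ 2) :=
    Finset.sum_le_sum fun a ha => mul_le_mul_of_nonneg_left (hg a ha) (hw a ha)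
  simp only [mul_sub, Finset.sum_sub_distrib, ← Finset.sum_mul, hw1, one_mul] at h4
  linarith

/-- For a summably perturbed Fejér monotone sequence `x (k + 1) = y k + v k`, the decreases of the
squared distance to `z` caused by the unperturbed steps `x k ↦ y k` are summable. -/
lemma summable_decrease {F : Type*} [NormedAddCommGroup F] {z : F} {x y v : ℕ → F}
    (hv : Summable fun k => ‖v k‖)
    (hx : ∀ k, x (k + 1) = y k + v k) (hy : ∀ k, 0 ≤ ‖x k - z‖ ^ 2 - ‖y k - z‖ ^ 2) :
    Summable fun k => ‖x k - z‖ ^ 2 - ‖y k - z‖ ^ 2 := by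
  have hyx : ∀ k, ‖y k - z‖ ≤ ‖x k - z‖ := fun k =>
    le_of_sq_le_sq (by linarith [hy k]) (norm_nonneg _)
  have hstep : ∀ k, ‖x (k + 1) - z‖ ≤ ‖y k - z‖ + ‖v k‖ := fun k => by
    rw [hx, add_sub_right_comm]; exact norm_add_le _ _
  set M := ‖x 0 - z‖ + ∑' k, ‖v k‖ with hM
  have hbd : ∀ k, ‖x k - z‖ ≤ M := by
    have h : ∀ k, ‖x k - z‖ ≤ ‖x 0 - z‖ + ∑ i ∈ Finset.range k, ‖v i‖ := by
      intro k
      induction k with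
      | zero => simp
      | succ k ih => rw [Finset.sum_range_succ]; linarith [hstep k, hyx k]
    intro k
    linarith [h k, hv.sum_le_tsum (Finset.range k) (fun i _ => norm_nonneg (v i))]
  have hdec : ∀ k, ‖x k - z‖ ^ 2 - ‖y k - z‖ ^ 2 ≤
      ‖x k - z‖ ^ 2 - ‖x (k + 1) - z‖ ^ 2 + 2 * M * ‖v k‖ := by
    intro k
    nlinarith [hstep k, hbd (k + 1), hbd k, hyx k, norm_nonneg (v k), norm_nonneg (y k - z),
      norm_nonneg (x (k + 1) - z),
      mul_le_mul_of_nonneg_right ((hyx k).trans (hbd k)) (norm_nonneg (v k)),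
      mul_le_mul_of_nonneg_right (hbd (k + 1)) (norm_nonneg (v k)),
      mul_le_mul_of_nonneg_left (hstep k) (norm_nonneg (y k - z)),
      mul_le_mul_of_nonneg_left (hstep k) (norm_nonneg (x (k + 1) - z))]
  have hM0 : 0 ≤ M := (norm_nonneg _).trans (hbd 0)
  refine summable_of_sum_range_le (c := ‖x 0 - z‖ ^ 2 + 2 * M * ∑' k, ‖v k‖) hy fun m => ?_
  have h1 := Finset.sum_le_sum fun k (_ : k ∈ Finset.range m) => hdec k
  rw [Finset.sum_add_distrib, Finset.sum_range_sub' (fun k => ‖x k - z‖ ^ 2),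
    ← Finset.mul_sum] at h1
  have h2 := mul_le_mul_of_nonneg_left
    (hv.sum_le_tsum (Finset.range m) (fun i _ => norm_nonneg (v i))) (by positivity : 0 ≤ 2 * M)
  linarith [sq_nonneg ‖x m - z‖]

end FejerLemmas

theorem stmt19
    (n : ℕ) (hn : 0 < n) (C : ℕ → Set (EuclideanSpace ℝ (Fin n)))
    (hCne : ∀ i, (C i).Nonempty) (hCcl : ∀ i, IsClosed (C i))
    (hCcv : ∀ i, Convex ℝ (C i)) (hCint : (⋂ i, C i).Nonempty)
    (P : ℕ → EuclideanSpace ℝ (Fin n) → EuclideanSpace ℝ (Fin n))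
    (hP : ∀ i x, P i x ∈ C i ∧ ∀ y ∈ C i, ‖x - P i x‖ ≤ ‖x - y‖)
    (ε : ℝ) (hε : 0 < ε)
    (Pe : ℕ → EuclideanSpace ℝ (Fin n) → EuclideanSpace ℝ (Fin n))
    (hPe : ∀ i x, (ε ≤ ‖x - P i x‖ → Pe i x = P i x) ∧ (‖x - P i x‖ < ε → Pe i x = x))
    (w : ℕ → List ℕ → ℝ) (hw : ∀ k, IsWeightFn (w k))
    (v : ℕ → EuclideanSpace ℝ (Fin n)) (hv : Summable (fun k => ‖v k‖))
    (x : ℕ → EuclideanSpace ℝ (Fin n))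
    (hx : ∀ k, x (k + 1) = (∑ᶠ ι, w k ι • projSeq Pe ι (x k)) + v k) :
    ∃ p : EuclideanSpace ℝ (Fin n),
      Tendsto x atTop (𝓝 p) ∧
      ∀ j : ℕ, ¬ Summable (fun k => ∑ᶠ ι ∈ {l : List ℕ | j ∈ l}, w k ι) →
        infDist p (C j) ≤ ε := by
  obtain ⟨z, hz⟩ := hCint
  rw [Set.mem_iInter] at hz
  set S : ℕ → Finset (List ℕ) := fun k => (hw k).2.2.1.toFinset with hS
  set y : ℕ → EuclideanSpace ℝ (Fin n) :=
    fun k => ∑ ι ∈ S k, w k ι • projSeq Pe ι (x k) with hy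
  have hxy : ∀ k, x (k + 1) = y k + v k := by
    intro k
    rw [hx k, finsum_eq_sum_of_support_subset (s := S k)]
    intro ι hι
    simp only [Function.mem_support, hS, Set.Finite.coe_toFinset] at hι ⊢
    exact fun h => hι (by rw [h, zero_smul])
  have hw0 : ∀ k, ∀ ι ∈ S k, 0 ≤ w k ι := fun k ι _ => (hw k).1 ι
  have hw1 : ∀ k, ∑ ι ∈ S k, w k ι = 1 := by
    intro k
    rw [← (hw k).2.2.2.2, finsum_eq_sum_of_support_subset (s := S k)]
    simp [hS]
  have hmove : ∀ k, ε * ‖y k - x k‖ ≤ ‖x k - z‖ ^ 2 - ‖y k - z‖ ^ 2 := by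
    intro k
    refine le_trans ?_ (weighted_decrease (S k) (hw0 k) (hw1 k)
      fun ι _ => projSeq_fejer hε hCcv hP hPe hz ι (x k))
    have h1 : y k - x k = ∑ ι ∈ S k, w k ι • (projSeq Pe ι (x k) - x k) := by
      simp only [hy, smul_sub, Finset.sum_sub_distrib, ← Finset.sum_smul, hw1, one_smul]
    rw [h1]
    refine (mul_le_mul_of_nonneg_left (norm_sum_le _ _) hε.le).trans (le_of_eq ?_)
    rw [Finset.mul_sum]
    refine Finset.sum_congr rfl fun ι hι => ?_
    rw [norm_smul, Real.norm_of_nonneg (hw0 k ι hι)]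
    ring
  have hsum : Summable fun k => ‖x k - z‖ ^ 2 - ‖y k - z‖ ^ 2 :=
    summable_decrease hv hxy fun k => (by positivity : 0 ≤ ε * ‖y k - x k‖).trans (hmove k)
  have hcauchy : CauchySeq x := by
    refine cauchySeq_of_dist_le_of_summable _ (fun k => ?_) ((hsum.mul_left ε⁻¹).add hv)
    have h1 : ‖y k - x k‖ ≤ ε⁻¹ * (‖x k - z‖ ^ 2 - ‖y k - z‖ ^ 2) :=
      (le_inv_mul_iff₀ hε).2 (hmove k)
    rw [dist_comm, dist_eq_norm, hxy, add_sub_right_comm]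
    exact (norm_add_le _ _).trans (by gcongr)
  obtain ⟨p, hp⟩ := cauchySeq_tendsto_of_complete hcauchy
  refine ⟨p, hp, fun j hj => ?_⟩
  by_contra! hlt
  apply hj
  have hfar : ∀ᶠ k in atTop, ε < infDist (x k) (C j) :=
    (((continuous_infDist_pt (C j)).tendsto p).comp hp).eventually_const_lt hlt
  refine Summable.of_norm_bounded_eventually_nat (hsum.mul_left (ε ^ 2)⁻¹) ?_
  filter_upwards [hfar] with k hk
  have hPj : ε ≤ ‖x k - P j (x k)‖ := by
    rw [← dist_eq_norm]
    exact hk.le.trans (infDist_le_dist_of_mem (hP j (x k)).1)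
  classical
  have hWsum : ∑ᶠ (ι : List ℕ) (_ : j ∈ ι), w k ι = ∑ ι ∈ S k, if j ∈ ι then w k ι else 0 := by
    rw [finsum_eq_sum_of_support_subset (s := S k)]
    · refine Finset.sum_congr rfl fun ι _ => ?_
      by_cases h : j ∈ ι <;> simp [h]
    · intro ι hι
      simp only [Function.mem_support, hS, Set.Finite.coe_toFinset] at hι ⊢
      exact fun h => hι (by simp [h])
  have hW0 : 0 ≤ ∑ ι ∈ S k, if j ∈ ι then w k ι else 0 :=
    Finset.sum_nonneg fun ι hι => by split_ifs <;> [exact hw0 k ι hι; exact le_rfl]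
  rw [hWsum, Real.norm_of_nonneg hW0, le_inv_mul_iff₀ (by positivity)]
  have h := weighted_decrease (z := z) (x := x k) (S k) (hw0 k) (hw1 k)
    (q := fun ι => projSeq Pe ι (x k)) (g := fun ι => if j ∈ ι then ε ^ 2 else 0) (by
      intro ι _
      split_ifs with hjι
      · exact projSeq_decrease hε hCcv hP hPe hz hPj ι hjι
      · exact (by positivity : 0 ≤ ε * ‖projSeq Pe ι (x k) - x k‖).trans
          (projSeq_fejer hε hCcv hP hPe hz ι (x k)))
  refine le_trans (le_of_eq ?_) h
  rw [Finset.mul_sum]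
  refine Finset.sum_congr rfl fun ι _ => ?_
  split_ifs <;> ring
end
end
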